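/- arXiv:math/0603636 — 4 statements merged into one kernel-verified Lean document; each statement's English description precedes it below -/
import Mathlib

section
/- Let α ∈ (0,1) and 0 < s < t < r. Then α ∫_t^r (r-u)^{α-1} u^{-α} (u-s)^{-α-1} du ≤ t^{-α} (t-s)^{-α} (r-s)^{-1} (r-t)^{α}. -/
open MeasureTheory Real Set

/-- Lemma 2.2: for `α ∈ (0,1)` and `0 < s < t < r`,
`α ∫_t^r (r-u)^(α-1) u^(-α) (u-s)^(-α-1) du ≤ t^(-α) (t-s)^(-α) (r-s)⁻¹ (r-t)^α`. -/
theorem integral_kernel_bound (α s t r : ℝ) (hα : α ∈ Set.Ioo (0 : ℝ) 1)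
    (hs : 0 < s) (hst : s < t) (htr : t < r) :
    α * ∫ u in Set.Ioo t r, (r - u) ^ (α - 1) * u ^ (-α) * (u - s) ^ (-α - 1) ≤
      t ^ (-α) * (t - s) ^ (-α) * (r - s)⁻¹ * (r - t) ^ α := by
  obtain ⟨h0, h1⟩ := hα
  have hrs : 0 < r - s := by linarith
  set F : ℝ → ℝ := fun u => -(α⁻¹ * (r - s)⁻¹) * ((r - u) ^ α * (u - s) ^ (-α)) with hF
  set g : ℝ → ℝ := fun u => (r - u) ^ (α - 1) * (u - s) ^ (-α - 1) with hg
  have hcont : ContinuousOn F (Icc t r) := by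
    refine continuousOn_const.mul (ContinuousOn.mul ?_ ?_)
    · exact ContinuousOn.rpow_const (by fun_prop) (fun x _ => Or.inr h0.le)
    · refine ContinuousOn.rpow_const (by fun_prop) (fun x hx => Or.inl ?_)
      have := hx.1
      linarith
  have hder : ∀ u ∈ Ioo t r, HasDerivAt F (g u) u := by
    intro u hu
    have a1 : 0 < r - u := by linarith [hu.2]
    have a2 : 0 < u - s := by linarith [hu.1]
    have d1 := ((hasDerivAt_id u).const_sub r).rpow_const (p := α) (Or.inl a1.ne')
    have d2 := ((hasDerivAt_id u).sub_const s).rpow_const (p := -α) (Or.inl a2.ne')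
    have d := (d1.mul d2).const_mul (-(α⁻¹ * (r - s)⁻¹))
    refine d.congr_deriv ?_
    simp only [id, hg]
    have e1 : (r - u) ^ α = (r - u) ^ (α - 1) * (r - u) := by
      rw [Real.rpow_sub_one a1.ne']; field_simp
    have e2 : (u - s) ^ (-α) = (u - s) ^ (-α - 1) * (u - s) := by
      rw [Real.rpow_sub_one a2.ne']; field_simp
    rw [e1, e2]
    field_simp
    ring
  have hgpos : ∀ u ∈ Ioo t r, 0 ≤ g u := by
    intro u hu
    have a1 : 0 < r - u := by linarith [hu.2]
    have a2 : 0 < u - s := by linarith [hu.1]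
    simp only [hg]; positivity
  have hint : IntegrableOn g (Ioc t r) :=
    intervalIntegral.integrableOn_deriv_of_nonneg hcont hder hgpos
  have hval : ∫ u in Ioo t r, g u = F r - F t := by
    rw [← integral_Ioc_eq_integral_Ioo, ← intervalIntegral.integral_of_le htr.le]
    exact intervalIntegral.integral_eq_sub_of_hasDerivAt_of_le htr.le hcont hder
      ((intervalIntegrable_iff_integrableOn_Ioc_of_le htr.le).2 hint)
  have hle : ∫ u in Ioo t r, (r - u) ^ (α - 1) * u ^ (-α) * (u - s) ^ (-α - 1) ≤
      ∫ u in Ioo t r, t ^ (-α) * g u := by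
    refine integral_mono_of_nonneg ?_ ((hint.mono_set Ioo_subset_Ioc_self).const_mul _) ?_
    · filter_upwards [ae_restrict_mem measurableSet_Ioo] with u hu
      have a1 : 0 < r - u := by linarith [hu.2]
      have a2 : 0 < u - s := by linarith [hu.1]
      have a3 : 0 < u := by linarith [hu.1]
      simp only [Pi.zero_apply]; positivity
    · filter_upwards [ae_restrict_mem measurableSet_Ioo] with u hu
      have h := hgpos u hu
      have h2 : u ^ (-α) ≤ t ^ (-α) :=
        Real.rpow_le_rpow_of_nonpos (by linarith) hu.1.le (by linarith)
      have := mul_le_mul_of_nonneg_right h2 h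
      simp only [hg] at this ⊢
      linarith
  rw [integral_const_mul, hval] at hle
  refine (mul_le_mul_of_nonneg_left hle h0.le).trans (le_of_eq ?_)
  simp only [hF, sub_self, Real.zero_rpow h0.ne']
  field_simp
  ring
end

section
/- Let α ∈ (0,1/2), p ∈ (2, 1/α), and let f ∈ Λ^α_T with representative φ_f ∈ L^p([0,T]). Then for each t ∈ [0,T] the function f·1_{[0,t]} also belongs to Λ^α_T, and its (unique) representative is given for almost every s ∈ [0,T] by φ_{f1_{[0,t]}}(s) = 1_{[0,t]}(s)·[φ_f(s) + (α s^α / Γ(1-α)) ∫_t^T u^{-α} f(u) (u-s)^{-1-α} du]; in particular the function on the right-hand side belongs to L²([0,T]). -/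
open MeasureTheory Real Set

/-- The right-sided fractional integral of order `α` on `[0,T]`:
`I^α_{T-}(f)(x) = (1/Γ(α)) ∫_x^T f(u) (u-x)^(α-1) du`. -/
noncomputable def fracInt (T α : ℝ) (f : ℝ → ℝ) (x : ℝ) : ℝ :=
  (1 / Real.Gamma α) * ∫ u in Set.Ioo x T, f u * (u - x) ^ (α - 1)

/-- `f ∈ Λ^α_T` with representative `φ`: `φ ∈ L²([0,T])` and
`f(u) = u^α · I^α_{T-}(s ↦ s^(-α) φ(s))(u)` for a.e. `u ∈ [0,T]`. -/
def memLambda (T α : ℝ) (f φ : ℝ → ℝ) : Prop :=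
  MemLp φ 2 (volume.restrict (Set.Icc 0 T)) ∧
  ∀ᵐ u ∂(volume.restrict (Set.Icc 0 T)),
    f u = u ^ α * fracInt T α (fun s => s ^ (-α) * φ s) u

open Filter Topology

lemma aux_fubini (μ ν : Measure ℝ) [SFinite μ] [SFinite ν] (G κ : ℝ → ℝ) (k : ℝ → ℝ → ℝ)
    (hG : AEStronglyMeasurable G ν)
    (hk : Measurable (Function.uncurry k))
    (hpos : ∀ᵐ v ∂ν, ∀ᵐ u ∂μ, 0 ≤ k u v)
    (hint : ∀ᵐ v ∂ν, Integrable (fun u => k u v) μ)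
    (hval : ∀ᵐ v ∂ν, ∫ u, k u v ∂μ = κ v)
    (hGκ : Integrable (fun v => G v * κ v) ν) :
    Integrable (fun u => ∫ v, G v * k u v ∂ν) μ ∧
      ∫ u, ∫ v, G v * k u v ∂ν ∂μ = ∫ v, G v * κ v ∂ν := by
  have hI : Integrable (Function.uncurry fun u v => G v * k u v) (μ.prod ν) := by
    have hm : AEStronglyMeasurable (Function.uncurry fun u v => G v * k u v) (μ.prod ν) :=
      (hG.comp_snd).mul hk.aestronglyMeasurable
    rw [integrable_prod_iff' hm]
    constructor
    · filter_upwards [hint] with v hv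
      exact hv.const_mul (G v)
    · refine hGκ.norm.congr ?_
      filter_upwards [hpos, hval] with v hv hv'
      have h1 : ∫ u, ‖Function.uncurry (fun u v => G v * k u v) (u, v)‖ ∂μ
          = ∫ u, ‖G v‖ * k u v ∂μ := by
        apply integral_congr_ae
        filter_upwards [hv] with u hu
        simp [Function.uncurry, abs_of_nonneg hu]
      rw [h1, integral_const_mul, hv', norm_mul]
      congr 1
      rw [← hv', Real.norm_of_nonneg (integral_nonneg_of_ae hv)]
  refine ⟨hI.integral_prod_left, ?_⟩
  rw [integral_integral_swap hI]
  apply integral_congr_ae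
  filter_upwards [hval] with v hv
  rw [integral_const_mul, hv]

lemma aux_integrable_of_ne {μ : Measure ℝ} {k : ℝ → ℝ} {c : ℝ} (h : ∫ u, k u ∂μ = c)
    (hc : c ≠ 0) : Integrable k μ := by
  by_contra hn
  rw [integral_undef hn] at h
  exact hc h.symm

lemma aux_beta (α : ℝ) (h0 : 0 < α) (h1 : α < 1) :
    ∫ r in Ioo (0 : ℝ) 1, r ^ (α - 1) * (1 - r) ^ (-α) = Real.Gamma α * Real.Gamma (1 - α) := by
  have hb := ProbabilityTheory.beta_eq_betaIntegralReal α (1 - α) h0 (by linarith)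
  simp only [ProbabilityTheory.beta, add_sub_cancel, Real.Gamma_one, div_one] at hb
  rw [hb, Complex.betaIntegral, intervalIntegral.integral_of_le zero_le_one,
    integral_Ioc_eq_integral_Ioo]
  have e : ∫ r in Ioo (0 : ℝ) 1, (r : ℂ) ^ ((α : ℂ) - 1) * (1 - (r : ℂ)) ^ (((1 - α : ℝ) : ℂ) - 1)
      = ∫ r in Ioo (0 : ℝ) 1, ((r ^ (α - 1) * (1 - r) ^ (-α) : ℝ) : ℂ) := by
    apply setIntegral_congr_fun measurableSet_Ioo
    intro r hr
    simp only
    rw [Complex.ofReal_mul, Complex.ofReal_cpow hr.1.le,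
      Complex.ofReal_cpow (by linarith [hr.2] : (0 : ℝ) ≤ 1 - r)]
    push_cast
    ring_nf
  rw [e, integral_complex_ofReal, Complex.ofReal_re]

lemma aux_kernel_one (α s t v : ℝ) (h0 : 0 < α) (h1 : α < 1) (hst : s < t) (htv : t < v) :
    ∫ u in Ioo t v, (v - u) ^ (α - 1) * (u - s) ^ (-1 - α)
      = (1 / α) * ((v - t) ^ α * (t - s) ^ (-α) / (v - s)) := by
  set F : ℝ → ℝ := fun u => -((1 / α) * ((v - u) ^ α * (u - s) ^ (-α) / (v - s))) with hF
  have hvs : v - s ≠ 0 := by linarith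
  have hc : ContinuousOn F (Icc t v) := by
    have a1 : ContinuousOn (fun u : ℝ => (v - u) ^ α) (Icc t v) :=
      ContinuousOn.rpow_const (by fun_prop) (fun _ _ => Or.inr h0.le)
    have a2 : ContinuousOn (fun u : ℝ => (u - s) ^ (-α)) (Icc t v) :=
      ContinuousOn.rpow_const (by fun_prop) (fun x hx => Or.inl (by linarith [hx.1]))
    exact ((a1.mul a2).div_const _).const_mul _ |>.neg
  have hd : ∀ u ∈ Ioo t v, HasDerivAt F ((v - u) ^ (α - 1) * (u - s) ^ (-1 - α)) u := by
    intro u hu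
    have p1 : 0 < v - u := by linarith [hu.2]
    have p2 : 0 < u - s := by linarith [hu.1]
    have d1 : HasDerivAt (fun u : ℝ => (v - u) ^ α) (-1 * α * (v - u) ^ (α - 1)) u :=
      ((hasDerivAt_id u).const_sub v).rpow_const (Or.inl p1.ne')
    have d2 : HasDerivAt (fun u : ℝ => (u - s) ^ (-α)) (1 * (-α) * (u - s) ^ (-α - 1)) u :=
      ((hasDerivAt_id u).sub_const s).rpow_const (Or.inl p2.ne')
    have d3 := (((d1.mul d2).div_const (v - s)).const_mul (1 / α)).neg
    refine d3.congr_deriv ?_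
    have e1 : (v - u) ^ α = (v - u) ^ (α - 1) * (v - u) := by
      rw [← Real.rpow_add_one p1.ne']; ring_nf
    have e2 : (u - s) ^ (-α) = (u - s) ^ (-1 - α) * (u - s) := by
      rw [← Real.rpow_add_one p2.ne']; ring_nf
    rw [show -α - 1 = -1 - α by ring, e1, e2]
    field_simp
    ring
  have hp : ∀ u ∈ Ioo t v, 0 ≤ (v - u) ^ (α - 1) * (u - s) ^ (-1 - α) := fun u hu =>
    mul_nonneg (Real.rpow_nonneg (by linarith [hu.2]) _) (Real.rpow_nonneg (by linarith [hu.1]) _)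
  have hi := intervalIntegral.integrableOn_deriv_of_nonneg hc hd hp
  have := intervalIntegral.integral_eq_sub_of_hasDerivAt_of_le htv.le hc hd
    ((intervalIntegrable_iff_integrableOn_Ioc_of_le htv.le).2 hi)
  rw [intervalIntegral.integral_of_le htv.le, integral_Ioc_eq_integral_Ioo] at this
  rw [this, hF]
  simp [Real.zero_rpow h0.ne']

lemma aux_kernel_two (α x t v : ℝ) (h0 : 0 < α) (h1 : α < 1) (hxt : x < t) (htv : t < v) :
    ∫ s in Ioo x t, (v - t) ^ α * (t - s) ^ (-α) / (v - s) * (s - x) ^ (α - 1)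
      = Real.Gamma α * Real.Gamma (1 - α) * (v - x) ^ (α - 1) := by
  set r : ℝ → ℝ := fun s => (v - t) / (t - x) * ((s - x) / (v - s)) with hr
  set r' : ℝ → ℝ := fun s => (v - t) / (t - x) * ((v - x) / (v - s) ^ 2) with hr'
  have ptx : 0 < t - x := by linarith
  have pvt : 0 < v - t := by linarith
  have pvx : 0 < v - x := by linarith
  have hd : ∀ s ∈ Ioo x t, HasDerivWithinAt r (r' s) (Ioo x t) s := by
    intro s hs
    have : v - s ≠ 0 := by linarith [hs.2]
    have d := ((((hasDerivAt_id s).sub_const x).div ((hasDerivAt_id s).const_sub v)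
      this).const_mul ((v - t) / (t - x)))
    refine (d.congr_deriv ?_).hasDerivWithinAt
    simp only [hr', id]
    ring
  have hinj : InjOn r (Ioo x t) := by
    intro a ha b hb hab
    have q1 : v - a ≠ 0 := by linarith [ha.2]
    have q2 : v - b ≠ 0 := by linarith [hb.2]
    have h3 : (a - x) / (v - a) = (b - x) / (v - b) :=
      mul_left_cancel₀ (div_pos pvt ptx).ne' hab
    rw [div_eq_div_iff q1 q2] at h3
    have : (v - x) * (a - b) = 0 := by linarith
    rcases mul_eq_zero.1 this with h | h <;> linarith
  have hone : ∀ s ∈ Ioo x t, 1 - r s = (t - s) * (v - x) / ((t - x) * (v - s)) := by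
    intro s hs
    have : v - s ≠ 0 := by linarith [hs.2]
    simp only [hr]
    field_simp
    ring
  have himg : r '' Ioo x t = Ioo 0 1 := by
    ext y
    constructor
    · rintro ⟨s, hs, rfl⟩
      have p1 : 0 < s - x := by linarith [hs.1]
      have p2 : 0 < t - s := by linarith [hs.2]
      have p3 : 0 < v - s := by linarith
      have h2 := hone s hs
      have h3 : 0 < (t - s) * (v - x) / ((t - x) * (v - s)) := by positivity
      refine ⟨by simp only [hr]; positivity, by linarith⟩
    · rintro ⟨hy0, hy1⟩
      have pd : 0 < (v - t) + y * (t - x) := by positivity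
      refine ⟨x + y * (t - x) * (v - x) / ((v - t) + y * (t - x)), ⟨?_, ?_⟩, ?_⟩
      · have : 0 < y * (t - x) * (v - x) / ((v - t) + y * (t - x)) := by positivity
        linarith
      · have : y * (t - x) * (v - x) / ((v - t) + y * (t - x)) < t - x := by
          rw [div_lt_iff₀ pd]
          have : 0 < (t - x) * ((1 - y) * (v - t)) := by
            have : 0 < 1 - y := by linarith
            positivity
          nlinarith
        linarith
      · simp only [hr]
        have e : v - (x + y * (t - x) * (v - x) / ((v - t) + y * (t - x)))
            = (v - x) * (v - t) / ((v - t) + y * (t - x)) := by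
          field_simp
          ring
        rw [e]
        field_simp
        ring
  have hcv := integral_image_eq_integral_abs_deriv_smul measurableSet_Ioo hd hinj
    (fun r => r ^ (α - 1) * (1 - r) ^ (-α))
  rw [himg, aux_beta α h0 h1] at hcv
  rw [hcv, ← integral_mul_const]
  apply setIntegral_congr_fun measurableSet_Ioo
  intro s hs
  have p1 : 0 < s - x := by linarith [hs.1]
  have p2 : 0 < t - s := by linarith [hs.2]
  have p3 : 0 < v - s := by linarith
  have hr'p : 0 < r' s := by simp only [hr']; positivity
  simp only [smul_eq_mul]
  rw [abs_of_pos hr'p, hone s hs]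
  simp only [hr, hr']
  rw [Real.mul_rpow (by positivity) (by positivity), Real.div_rpow pvt.le ptx.le,
    Real.div_rpow p1.le p3.le, Real.div_rpow (by positivity) (by positivity),
    Real.mul_rpow p2.le pvx.le, Real.mul_rpow ptx.le p3.le]
  have E : ∀ z : ℝ, 0 < z → z ^ (α - 1) = z ^ α / z := fun z hz => Real.rpow_sub_one hz.ne' α
  have E' : ∀ z : ℝ, 0 < z → z ^ (-α) = 1 / z ^ α := fun z hz => by
    rw [Real.rpow_neg hz.le, one_div]
  have P : ∀ z : ℝ, 0 < z → 0 < z ^ α := fun z hz => Real.rpow_pos_of_pos hz α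
  rw [E _ pvt, E _ ptx, E _ p1, E _ p3, E _ pvx, E' _ p2, E' _ pvx, E' _ ptx, E' _ p3]
  have := P _ pvt
  have := P _ ptx
  have := P _ p1
  have := P _ p2
  have := P _ p3
  have := P _ pvx
  field_simp

lemma aux_h (T α s t : ℝ) (h0 : 0 < α) (h1 : α < 1) (hst : s < t) (F g : ℝ → ℝ)
    (hg : IntegrableOn g (Ioo t T))
    (hF : ∀ᵐ u ∂(volume.restrict (Ioo t T)), F u = fracInt T α g u) :
    ∫ u in Ioo t T, F u * (u - s) ^ (-1 - α)
      = (1 / Real.Gamma α) * (1 / α) *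
        ∫ v in Ioo t T, g v * ((v - t) ^ α * (t - s) ^ (-α) / (v - s)) := by
  set k : ℝ → ℝ → ℝ := fun u v =>
    if u < v then (v - u) ^ (α - 1) * (u - s) ^ (-1 - α) else 0 with hk
  have hkm : Measurable (Function.uncurry k) := by
    simp only [hk]
    exact Measurable.ite (measurableSet_lt measurable_fst measurable_snd) (by fun_prop) (by fun_prop)
  have hval : ∀ v ∈ Ioo t T, ∫ u in Ioo t T, k u v
      = (1 / α) * ((v - t) ^ α * (t - s) ^ (-α) / (v - s)) := by
    intro v hv
    rw [← aux_kernel_one α s t v h0 h1 hst hv.1]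
    have : (fun u => k u v) = indicator (Iio v)
        (fun u => (v - u) ^ (α - 1) * (u - s) ^ (-1 - α)) := by
      funext u
      simp [hk, indicator_apply]
    rw [this, setIntegral_indicator measurableSet_Iio]
    congr 2
    ext u
    simp only [mem_inter_iff, mem_Ioo, mem_Iio]
    constructor
    · rintro ⟨⟨a, b⟩, c⟩; exact ⟨a, c⟩
    · rintro ⟨a, b⟩; exact ⟨⟨a, b.trans hv.2⟩, b⟩
  have hfub := aux_fubini (volume.restrict (Ioo t T)) (volume.restrict (Ioo t T)) g
    (fun v => (1 / α) * ((v - t) ^ α * (t - s) ^ (-α) / (v - s))) k hg.aestronglyMeasurable hkm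
    (by
      refine Eventually.of_forall fun v => ?_
      filter_upwards [ae_restrict_mem measurableSet_Ioo] with u hu
      simp only [hk]
      split_ifs with h
      · exact mul_nonneg (Real.rpow_nonneg (by linarith) _)
          (Real.rpow_nonneg (by linarith [hu.1]) _)
      · exact le_rfl)
    (by
      filter_upwards [ae_restrict_mem measurableSet_Ioo] with v hv
      refine aux_integrable_of_ne (hval v hv) ?_
      have p1 : 0 < v - t := by linarith [hv.1]
      have p2 : 0 < t - s := by linarith
      have p3 : 0 < v - s := by linarith
      positivity)
    (by
      filter_upwards [ae_restrict_mem measurableSet_Ioo] with v hv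
      exact hval v hv)
    (by
      refine hg.mul_bdd (c := (1 / α) * ((T - t) ^ α * (t - s) ^ (-α) / (t - s)))
        (Measurable.aestronglyMeasurable (by fun_prop)) ?_
      filter_upwards [ae_restrict_mem measurableSet_Ioo] with v hv
      have p1 : 0 < v - t := by linarith [hv.1]
      have p2 : 0 < t - s := by linarith
      have p3 : 0 < v - s := by linarith
      rw [Real.norm_of_nonneg (by positivity)]
      have := hv.2
      have p4 : 0 < T - t := by linarith
      gcongr
      linarith)
  have e2 : ∫ v in Ioo t T, g v * ((1 / α) * ((v - t) ^ α * (t - s) ^ (-α) / (v - s)))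
      = (1 / α) * ∫ v in Ioo t T, g v * ((v - t) ^ α * (t - s) ^ (-α) / (v - s)) := by
    rw [← integral_const_mul]
    congr 1
    funext v
    ring
  rw [mul_assoc, ← e2, ← hfub.2, ← integral_const_mul]
  apply integral_congr_ae
  filter_upwards [hF, ae_restrict_mem measurableSet_Ioo] with u hu hut
  rw [hu, fracInt, mul_assoc, ← integral_mul_const]
  congr 1
  have : (fun v => g v * k u v) = indicator (Ioi u)
      (fun v => g v * (v - u) ^ (α - 1) * (u - s) ^ (-1 - α)) := by
    funext v
    simp only [hk, indicator_apply, mem_Ioi]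
    split_ifs <;> ring
  rw [this, setIntegral_indicator measurableSet_Ioi]
  congr 2
  ext v
  simp only [mem_inter_iff, mem_Ioo, mem_Ioi]
  constructor
  · rintro ⟨a, b⟩; exact ⟨⟨hut.1.trans a, b⟩, a⟩
  · rintro ⟨⟨a, b⟩, c⟩; exact ⟨c, b⟩

lemma aux_second (T α x t : ℝ) (h0 : 0 < α) (h1 : α < 1) (hxt : x < t) (g h : ℝ → ℝ)
    (hg : IntegrableOn g (Ioo t T))
    (hh : ∀ s ∈ Ioo x t, h s = (1 / (Real.Gamma α * Real.Gamma (1 - α))) *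
        ∫ v in Ioo t T, g v * ((v - t) ^ α * (t - s) ^ (-α) / (v - s))) :
    IntegrableOn (fun s => h s * (s - x) ^ (α - 1)) (Ioo x t) ∧
    ∫ s in Ioo x t, h s * (s - x) ^ (α - 1) = ∫ v in Ioo t T, g v * (v - x) ^ (α - 1) := by
  have G0 : 0 < Real.Gamma α := Real.Gamma_pos_of_pos h0
  have G1 : 0 < Real.Gamma (1 - α) := Real.Gamma_pos_of_pos (by linarith)
  have hfub := aux_fubini (volume.restrict (Ioo x t)) (volume.restrict (Ioo t T)) g
    (fun v => Real.Gamma α * Real.Gamma (1 - α) * (v - x) ^ (α - 1))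
    (fun s v => (v - t) ^ α * (t - s) ^ (-α) / (v - s) * (s - x) ^ (α - 1))
    hg.aestronglyMeasurable (by simp only [Function.uncurry_def]; fun_prop)
    (by
      filter_upwards [ae_restrict_mem measurableSet_Ioo] with v hv
      filter_upwards [ae_restrict_mem measurableSet_Ioo] with s hs
      have p1 : 0 < v - t := by linarith [hv.1]
      have p2 : 0 < t - s := by linarith [hs.2]
      have p3 : 0 < v - s := by linarith
      have p4 : 0 < s - x := by linarith [hs.1]
      positivity)
    (by
      filter_upwards [ae_restrict_mem measurableSet_Ioo] with v hv
      refine aux_integrable_of_ne (aux_kernel_two α x t v h0 h1 hxt hv.1) ?_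
      have p1 : 0 < v - x := by linarith [hv.1]
      positivity)
    (by
      filter_upwards [ae_restrict_mem measurableSet_Ioo] with v hv
      exact aux_kernel_two α x t v h0 h1 hxt hv.1)
    (by
      refine hg.mul_bdd (c := Real.Gamma α * Real.Gamma (1 - α) * (t - x) ^ (α - 1))
        (Measurable.aestronglyMeasurable (by fun_prop)) ?_
      filter_upwards [ae_restrict_mem measurableSet_Ioo] with v hv
      have p1 : 0 < v - x := by linarith [hv.1]
      rw [Real.norm_of_nonneg (by positivity)]
      refine mul_le_mul_of_nonneg_left ?_ (by positivity)
      exact Real.rpow_le_rpow_of_nonpos (by linarith) (by linarith [hv.1]) (by linarith))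
  have key : ∀ s ∈ Ioo x t, (1 / (Real.Gamma α * Real.Gamma (1 - α))) *
      (∫ v in Ioo t T, g v * ((v - t) ^ α * (t - s) ^ (-α) / (v - s) * (s - x) ^ (α - 1)))
      = h s * (s - x) ^ (α - 1) := by
    intro s hs
    rw [hh s hs, mul_assoc, ← integral_mul_const]
    congr 2
    funext v
    ring
  constructor
  · exact (IntegrableOn.congr_fun (Integrable.const_mul hfub.1
      (1 / (Real.Gamma α * Real.Gamma (1 - α)))) key measurableSet_Ioo)
  · rw [← setIntegral_congr_fun measurableSet_Ioo key, integral_const_mul, hfub.2,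
      ← integral_const_mul]
    congr 1
    funext v
    field_simp

lemma aux_holder (T α p q s t : ℝ) (hpq : p.HolderConjugate q) (hq : (α - 1) * q < -1)
    (h1 : α < 1) (hst : s < t) (htT : t ≤ T) (φ : ℝ → ℝ)
    (hφ : MemLp φ (ENNReal.ofReal p) (volume.restrict (Ioo t T))) :
    IntegrableOn (fun v => |φ v| * (v - s) ^ (α - 1)) (Ioo t T) ∧
    ∫ v in Ioo t T, |φ v| * (v - s) ^ (α - 1) ≤
      (∫ v in Ioo t T, |φ v| ^ p) ^ (1 / p) *
        ((1 / (-((α - 1) * q + 1))) ^ (1 / q) * (t - s) ^ (α - 1 / p)) := by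
  have hm : MemLp (fun v : ℝ => (v - s) ^ (α - 1)) (ENNReal.ofReal q)
      (volume.restrict (Ioo t T)) := by
    refine MemLp.of_bound (C := (t - s) ^ (α - 1))
      (Measurable.aestronglyMeasurable (by fun_prop)) ?_
    filter_upwards [ae_restrict_mem measurableSet_Ioo] with v hv
    have p1 : 0 < v - s := by linarith [hv.1]
    rw [Real.norm_of_nonneg (by positivity)]
    exact Real.rpow_le_rpow_of_nonpos (by linarith) (by linarith [hv.1]) (by linarith)
  have hφ' : MemLp (fun v => |φ v|) (ENNReal.ofReal p) (volume.restrict (Ioo t T)) := hφ.norm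
  have : ENNReal.HolderConjugate (ENNReal.ofReal p) (ENNReal.ofReal q) := hpq.ennrealOfReal
  refine ⟨hφ'.integrable_mul hm, ?_⟩
  refine (integral_mul_le_Lp_mul_Lq_of_nonneg hpq (Eventually.of_forall fun v => abs_nonneg _)
    ?_ hφ' hm).trans ?_
  · filter_upwards [ae_restrict_mem measurableSet_Ioo] with v hv
    exact Real.rpow_nonneg (by linarith [hv.1]) _
  refine mul_le_mul_of_nonneg_left ?_ (by positivity)
  have hpos : 0 < t - s := by linarith
  have e : ∫ v in Ioo t T, ((v - s) ^ (α - 1)) ^ q = ∫ v in Ioo t T, (v - s) ^ ((α - 1) * q) := by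
    apply setIntegral_congr_fun measurableSet_Ioo
    intro v hv
    exact (Real.rpow_mul (by linarith [hv.1]) _ _).symm
  have e2 : ∫ v in Ioo t T, (v - s) ^ ((α - 1) * q)
      ≤ (1 / (-((α - 1) * q + 1))) * (t - s) ^ ((α - 1) * q + 1) := by
    rw [← integral_Ioc_eq_integral_Ioo, ← intervalIntegral.integral_of_le htT,
      intervalIntegral.integral_comp_sub_right (fun v => v ^ ((α - 1) * q)) s,
      integral_rpow (Or.inr ⟨by linarith, by
        rw [uIcc_of_le (by linarith)]
        intro h
        linarith [h.1]⟩)]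
    have hn : (α - 1) * q + 1 < 0 := by linarith
    have hT : 0 ≤ (T - s) ^ ((α - 1) * q + 1) := Real.rpow_nonneg (by linarith) _
    rw [div_le_iff_of_neg hn]
    have : 1 / (-((α - 1) * q + 1)) * (t - s) ^ ((α - 1) * q + 1) * ((α - 1) * q + 1)
        = - (t - s) ^ ((α - 1) * q + 1) := by
      field_simp
      rw [div_self hn.ne]
    rw [this]
    linarith
  have hd : 0 < 1 / (-((α - 1) * q + 1)) := by
    apply one_div_pos.2
    linarith
  have hq0 : 0 < q := hpq.symm.pos
  have hpqe := hpq.inv_add_inv_eq_one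
  rw [e]
  calc (∫ v in Ioo t T, (v - s) ^ ((α - 1) * q)) ^ (1 / q)
      ≤ ((1 / (-((α - 1) * q + 1))) * (t - s) ^ ((α - 1) * q + 1)) ^ (1 / q) := by
        refine Real.rpow_le_rpow ?_ e2 (by positivity)
        apply setIntegral_nonneg measurableSet_Ioo
        intro v hv
        exact Real.rpow_nonneg (by linarith [hv.1]) _
    _ = _ := by
        rw [Real.mul_rpow hd.le (by positivity), ← Real.rpow_mul hpos.le]
        congr 2
        rw [add_mul, mul_assoc, mul_one_div_cancel hq0.ne']
        simp only [one_div]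
        linarith
/-- Lemma 2.3 (first part): if `f ∈ Λ^α_T` with representative `φ_f ∈ L^p([0,T])`,
`p ∈ (2, 1/α)`, then for every `t ∈ [0,T]`, `f·1_{[0,t]} ∈ Λ^α_T` with representative
`s ↦ 1_{[0,t]}(s)·[φ_f(s) + (α s^α/Γ(1-α)) ∫_t^T u^{-α} f(u)(u-s)^{-1-α} du]`
(in particular this function is in `L²([0,T])`). -/
theorem indicator_memLambda (T α p : ℝ) (hT : 0 < T) (hα : α ∈ Set.Ioo (0 : ℝ) (1 / 2))
    (hp : p ∈ Set.Ioo 2 (1 / α)) (f φ : ℝ → ℝ) (hfφ : memLambda T α f φ)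
    (hφp : MemLp φ (ENNReal.ofReal p) (volume.restrict (Set.Icc 0 T)))
    (t : ℝ) (ht : t ∈ Set.Icc 0 T) :
    memLambda T α (Set.indicator (Set.Icc 0 t) f)
      (Set.indicator (Set.Icc 0 t) (fun s =>
        φ s + (α * s ^ α / Real.Gamma (1 - α)) *
          ∫ u in Set.Ioo t T, u ^ (-α) * f u * (u - s) ^ (-1 - α))) := by
  obtain ⟨h0, hhalf⟩ := hα
  obtain ⟨hp2, hpα⟩ := hp
  obtain ⟨ht0, htT⟩ := ht
  obtain ⟨hφ2, hf⟩ := hfφ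
  have h1 : α < 1 := by linarith
  have G0 : 0 < Real.Gamma α := Real.Gamma_pos_of_pos h0
  have G1 : 0 < Real.Gamma (1 - α) := Real.Gamma_pos_of_pos (by linarith)
  set g : ℝ → ℝ := fun s => s ^ (-α) * φ s with hgdef
  set H : ℝ → ℝ := fun s => ∫ u in Set.Ioo t T, u ^ (-α) * f u * (u - s) ^ (-1 - α) with hH
  have hsub : Ioo t T ⊆ Icc 0 T := fun u hu => ⟨ht0.trans hu.1.le, hu.2.le⟩
  have hg : IntegrableOn g (Ioo t T) := by
    have hm : MemLp (fun s : ℝ => s ^ (-α)) 2 (volume.restrict (Icc 0 T)) := by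
      rw [memLp_two_iff_integrable_sq (Measurable.aestronglyMeasurable (by fun_prop))]
      have : IntegrableOn (fun s : ℝ => s ^ (-α * 2)) (Icc 0 T) := by
        rw [integrableOn_Icc_iff_integrableOn_Ioc,
          ← intervalIntegrable_iff_integrableOn_Ioc_of_le hT.le]
        exact intervalIntegral.intervalIntegrable_rpow' (by linarith)
      refine this.congr_fun ?_ measurableSet_Icc
      intro s hs
      simp only
      rw [Real.rpow_mul hs.1]
      norm_cast
    exact IntegrableOn.mono_set (hm.integrable_mul hφ2) hsub
  have hF : ∀ᵐ u ∂(volume.restrict (Ioo t T)), u ^ (-α) * f u = fracInt T α g u := by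
    filter_upwards [ae_restrict_of_ae_restrict_of_subset hsub hf,
      ae_restrict_mem measurableSet_Ioo] with u hu hut
    have : 0 < u := ht0.trans_lt hut.1
    rw [hu, ← mul_assoc, ← Real.rpow_add this]
    simp
  have hHs : ∀ s, s < t → α / Real.Gamma (1 - α) * H s
      = (1 / (Real.Gamma α * Real.Gamma (1 - α))) *
        ∫ v in Ioo t T, g v * ((v - t) ^ α * (t - s) ^ (-α) / (v - s)) := by
    intro s hs
    simp only [hH]
    rw [aux_h T α s t h0 h1 hs _ g hg hF]
    generalize (∫ v in Ioo t T, g v * ((v - t) ^ α * (t - s) ^ (-α) / (v - s))) = J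
    field_simp
  have hae : (volume.restrict (Icc 0 t) : Measure ℝ) = volume.restrict (Ioo 0 t) :=
    Measure.restrict_congr_set Ioo_ae_eq_Icc.symm
  constructor
  · rw [memLp_indicator_iff_restrict measurableSet_Icc,
      Measure.restrict_restrict measurableSet_Icc,
      inter_eq_self_of_subset_left (Icc_subset_Icc_right htT)]
    refine MemLp.add (hφ2.mono_measure (Measure.restrict_mono_set _ (Icc_subset_Icc_right htT))) ?_
    rw [hae]
    rcases ht0.eq_or_lt with ht00 | htpos
    · rw [← ht00]; simp
    have hp0 : 0 < p := by linarith
    set q := p.conjExponent with hq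
    have hpq : p.HolderConjugate q := Real.HolderConjugate.conjExponent (by linarith)
    have hq0 : 0 < q := hpq.symm.pos
    have hpqe := hpq.inv_add_inv_eq_one
    have hαp : α < p⁻¹ := by
      rw [← one_div]
      rw [lt_div_iff₀ h0] at hpα
      rw [lt_div_iff₀ hp0]
      linarith
    have hqlt : (α - 1) * q < -1 := by
      have : (α - 1) < - q⁻¹ := by linarith
      have := mul_lt_mul_of_pos_right this hq0
      rwa [neg_mul, inv_mul_cancel₀ hq0.ne'] at this
    have hφI : MemLp φ (ENNReal.ofReal p) (volume.restrict (Ioo t T)) :=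
      hφp.mono_measure (Measure.restrict_mono_set _ hsub)
    set N := (∫ v in Ioo t T, |φ v| ^ p) ^ (1 / p) * (1 / (-((α - 1) * q + 1))) ^ (1 / q) with hN
    set C := t ^ α * ((1 / (Real.Gamma α * Real.Gamma (1 - α))) * (t ^ (-α) * N)) with hC
    have hform : ∀ s ∈ Ioo 0 t, s ^ α * ((1 / (Real.Gamma α * Real.Gamma (1 - α))) *
        ∫ v in Ioo t T, g v * ((v - t) ^ α * (t - s) ^ (-α) / (v - s)))
        = α * s ^ α / Real.Gamma (1 - α) * H s := by
      intro s hs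
      rw [← hHs s hs.2]
      ring
    have hmeas : AEStronglyMeasurable (fun s => α * s ^ α / Real.Gamma (1 - α) * H s)
        (volume.restrict (Ioo 0 t)) := by
      have hm : AEStronglyMeasurable (fun s => ∫ v in Ioo t T,
          g v * ((v - t) ^ α * (t - s) ^ (-α) / (v - s))) (volume.restrict (Ioo 0 t)) := by
        refine AEStronglyMeasurable.integral_prod_right'
          (f := fun z : ℝ × ℝ => g z.2 * ((z.2 - t) ^ α * (t - z.1) ^ (-α) / (z.2 - z.1))) ?_
        exact hg.aestronglyMeasurable.comp_snd.mul
          (Measurable.aestronglyMeasurable (by fun_prop))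
      refine AEStronglyMeasurable.congr (f := fun s =>
        s ^ α * ((1 / (Real.Gamma α * Real.Gamma (1 - α))) *
        ∫ v in Ioo t T, g v * ((v - t) ^ α * (t - s) ^ (-α) / (v - s)))) ?_ ?_
      · exact (Measurable.aestronglyMeasurable (by fun_prop)).mul (hm.const_mul _)
      · filter_upwards [ae_restrict_mem measurableSet_Ioo] with s hs
        exact hform s hs
    have hdom : MemLp (fun s : ℝ => C * (t - s) ^ (-(1 / p))) 2 (volume.restrict (Ioo 0 t)) := by
      refine MemLp.const_mul ?_ C
      rw [memLp_two_iff_integrable_sq (Measurable.aestronglyMeasurable (by fun_prop))]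
      have : IntegrableOn (fun s : ℝ => (t - s) ^ (-(1 / p) * 2)) (Ioo 0 t) := by
        rw [← integrableOn_Ioc_iff_integrableOn_Ioo,
          ← intervalIntegrable_iff_integrableOn_Ioc_of_le ht0]
        have hlt : -1 < -(1 / p) * 2 := by
          have : 1 / p < 1 / 2 := one_div_lt_one_div_of_lt (by norm_num) hp2
          linarith
        have := (intervalIntegral.intervalIntegrable_rpow' (a := 0) (b := t) hlt).comp_sub_left t
        simpa using this.symm
      refine this.congr_fun ?_ measurableSet_Ioo
      intro s hs
      simp only
      rw [Real.rpow_mul (by linarith [hs.2])]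
      norm_cast
    refine hdom.of_le hmeas ?_
    filter_upwards [ae_restrict_mem measurableSet_Ioo] with s hs
    refine le_trans ?_ (le_abs_self _)
    rw [← hform s hs]
    have ps : 0 < s := hs.1
    have pts : 0 < t - s := by linarith [hs.2]
    obtain ⟨i1, i2⟩ := aux_holder T α p q s t hpq hqlt h1 hs.2 htT φ hφI
    have hb : ‖∫ v in Ioo t T, g v * ((v - t) ^ α * (t - s) ^ (-α) / (v - s))‖
        ≤ t ^ (-α) * (t - s) ^ (-α) * ∫ v in Ioo t T, |φ v| * (v - s) ^ (α - 1) := by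
      rw [← integral_const_mul]
      refine norm_integral_le_of_norm_le (Integrable.const_mul i1 _) ?_
      filter_upwards [ae_restrict_mem measurableSet_Ioo] with v hv
      have pv : 0 < v := htpos.trans hv.1
      have pvt : 0 < v - t := by linarith [hv.1]
      have pvs : 0 < v - s := by linarith
      simp only [hgdef]
      rw [norm_mul, norm_mul, Real.norm_of_nonneg (Real.rpow_nonneg pv.le _),
        Real.norm_of_nonneg (by positivity : 0 ≤ (v - t) ^ α * (t - s) ^ (-α) / (v - s)),
        Real.norm_eq_abs]
      have b1 : v ^ (-α) ≤ t ^ (-α) :=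
        Real.rpow_le_rpow_of_nonpos htpos hv.1.le (by linarith)
      have b2 : (v - t) ^ α ≤ (v - s) ^ α :=
        Real.rpow_le_rpow pvt.le (by linarith) h0.le
      calc v ^ (-α) * |φ v| * ((v - t) ^ α * (t - s) ^ (-α) / (v - s))
          ≤ t ^ (-α) * |φ v| * ((v - s) ^ α * (t - s) ^ (-α) / (v - s)) := by gcongr
        _ = _ := by rw [Real.rpow_sub_one pvs.ne']; ring
    have hexp : (t - s) ^ (-(1 / p)) = (t - s) ^ (-α) * (t - s) ^ (α - 1 / p) := by
      rw [← Real.rpow_add pts]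
      ring_nf
    rw [norm_mul, norm_mul, Real.norm_of_nonneg (by positivity : 0 ≤ s ^ α),
      Real.norm_of_nonneg (by positivity : 0 ≤ 1 / (Real.Gamma α * Real.Gamma (1 - α)))]
    have b3 : s ^ α ≤ t ^ α := Real.rpow_le_rpow ps.le hs.2.le h0.le
    calc _ ≤ t ^ α * (1 / (Real.Gamma α * Real.Gamma (1 - α)) *
          (t ^ (-α) * (t - s) ^ (-α) * ((∫ v in Ioo t T, |φ v| ^ p) ^ (1 / p) *
        ((1 / (-((α - 1) * q + 1))) ^ (1 / q) * (t - s) ^ (α - 1 / p))))) := by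
          refine mul_le_mul b3 ?_ (by positivity) (by positivity)
          refine mul_le_mul_of_nonneg_left (hb.trans ?_) (by positivity)
          exact mul_le_mul_of_nonneg_left i2 (by positivity)
      _ = C * (t - s) ^ (-(1 / p)) := by
          rw [hexp, hC, hN]
          ring
  · have hne : ∀ᵐ u ∂(volume.restrict (Icc 0 T)), u ≠ t ∧ u ≠ 0 := by
      refine ae_restrict_of_ae ?_
      filter_upwards [Measure.ae_ne volume t, Measure.ae_ne volume (0 : ℝ)] with u a b
      exact ⟨a, b⟩
    filter_upwards [hf, hne, ae_restrict_mem measurableSet_Icc] with x hfx hx hx0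
    rcases lt_or_gt_of_ne hx.1 with hxt | hxt
    · rw [indicator_of_mem (show x ∈ Icc 0 t from ⟨hx0.1, hxt.le⟩), hfx]
      congr 1
      simp only [fracInt]
      congr 1
      obtain ⟨j1, j2⟩ := aux_second T α x t h0 h1 hxt g (fun s => α / Real.Gamma (1 - α) * H s) hg
        (fun s hs => hHs s hs.2)
      have hR : ∫ u in Ioo x T, u ^ (-α) * (Icc 0 t).indicator
            (fun s => φ s + α * s ^ α / Real.Gamma (1 - α) * H s) u * (u - x) ^ (α - 1)
          = ∫ u in Ioo x t, (g u * (u - x) ^ (α - 1)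
            + α / Real.Gamma (1 - α) * H u * (u - x) ^ (α - 1)) := by
        have e1 : ∀ u ∈ Ioo x T, u ^ (-α) * (Icc 0 t).indicator
            (fun s => φ s + α * s ^ α / Real.Gamma (1 - α) * H s) u * (u - x) ^ (α - 1)
            = (Iic t).indicator (fun u => g u * (u - x) ^ (α - 1)
            + α / Real.Gamma (1 - α) * H u * (u - x) ^ (α - 1)) u := by
          intro u hu
          have pu : 0 < u := hx0.1.trans_lt hu.1
          by_cases hut : u ≤ t
          · rw [indicator_of_mem (show u ∈ Icc 0 t from ⟨pu.le, hut⟩),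
              indicator_of_mem (show u ∈ Iic t from hut)]
            have : u ^ (-α) * u ^ α = 1 := by rw [← Real.rpow_add pu]; simp
            simp only [hgdef]
            linear_combination (α / Real.Gamma (1 - α) * H u * (u - x) ^ (α - 1)) * this
          · rw [indicator_of_notMem (fun h => hut h.2), indicator_of_notMem (show u ∉ Iic t from hut)]
            ring
        rw [setIntegral_congr_fun measurableSet_Ioo e1, setIntegral_indicator measurableSet_Iic]
        apply setIntegral_congr_set
        filter_upwards [Measure.ae_ne volume t] with u hu
        apply propext
        constructor
        · rintro ⟨a, b⟩
          exact ⟨a.1, lt_of_le_of_ne b hu⟩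
        · rintro ⟨a, b⟩
          exact ⟨⟨a, b.trans_le htT⟩, b.le⟩
      refine Eq.trans ?_ hR.symm
      have hdisj : Ioo x T =ᵐ[volume] (Ioo x t ∪ Ioo t T : Set ℝ) := by
        filter_upwards [Measure.ae_ne volume t] with u hu
        apply propext
        constructor
        · rintro ⟨a, b⟩
          rcases lt_or_gt_of_ne hu with h | h
          · exact Or.inl ⟨a, h⟩
          · exact Or.inr ⟨h, b⟩
        · rintro (⟨a, b⟩ | ⟨a, b⟩)
          · exact ⟨a, b.trans_le htT⟩
          · exact ⟨hxt.trans a, b⟩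
      have hgt : IntegrableOn (fun u => g u * (u - x) ^ (α - 1)) (Ioo t T) := by
        refine hg.mul_bdd (c := (t - x) ^ (α - 1))
          (Measurable.aestronglyMeasurable (by fun_prop)) ?_
        filter_upwards [ae_restrict_mem measurableSet_Ioo] with v hv
        have p1 : 0 < v - x := by linarith [hv.1]
        rw [Real.norm_of_nonneg (by positivity)]
        exact Real.rpow_le_rpow_of_nonpos (by linarith) (by linarith [hv.1]) (by linarith)
      rw [setIntegral_congr_set hdisj]
      by_cases hgi : IntegrableOn (fun u => g u * (u - x) ^ (α - 1)) (Ioo x t)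
      · rw [integral_add hgi j1, j2, setIntegral_union _ measurableSet_Ioo hgi hgt]
        rw [Set.disjoint_left]
        intro a ha hb
        linarith [ha.2, hb.1]
      · rw [integral_undef (fun h => hgi (IntegrableOn.mono_set h subset_union_left)),
          integral_undef]
        intro h
        apply hgi
        have := Integrable.sub h j1
        refine this.congr (Eventually.of_forall fun u => ?_)
        simp only [Pi.sub_apply]
        ring
    · rw [indicator_of_notMem (fun h => absurd h.2 (not_le.2 hxt))]
      simp only [fracInt]
      rw [setIntegral_eq_zero_of_forall_eq_zero]
      · simp
      · intro u hu
        rw [indicator_of_notMem (fun h => absurd h.2 (not_le.2 (hxt.trans hu.1)))]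
        simp
end

section
/- Let α ∈ (0,1/2), p ∈ (2, 1/α) and p' ∈ [2, p). There exists a constant C, depending only on α, p, p' and T, such that for every t ∈ [0,T] and every f ∈ Λ^α_T with representative φ_f ∈ L^p([0,T]), the representative φ_{f1_{[0,t]}} of f·1_{[0,t]} ∈ Λ^α_T satisfies ‖φ_{f1_{[0,t]}}‖_{L^{p'}([0,T])} ≤ C ‖φ_f‖_{L^p([0,T])}. -/
open MeasureTheory Real Set

theorem ae_zero_of_tail {F : ℝ → ℝ} (hF : Integrable F)
    (h : ∀ x, 0 ≤ x → ∫ u in Ioi x, F u = 0) : ∀ᵐ x, 0 < x → F x = 0 := by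
  filter_upwards [LocallyIntegrable.ae_hasDerivAt_integral hF.locallyIntegrable] with x hx hx0
  have h1 := hx 0
  have h2 : (fun x => ∫ t in (0:ℝ)..x, F t) =ᶠ[nhds x] fun _ => (0:ℝ) := by
    filter_upwards [Ioi_mem_nhds hx0] with y hy
    have hy' : (0:ℝ) ≤ y := le_of_lt hy
    rw [intervalIntegral.integral_of_le hy']
    have := setIntegral_union (f := F) (μ := volume) (Ioc_disjoint_Ioi (le_refl y) : Disjoint (Ioc 0 y) (Ioi y))
      measurableSet_Ioi hF.integrableOn hF.integrableOn
    rw [Ioc_union_Ioi_eq_Ioi hy', h 0 le_rfl, h y hy'] at this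
    linarith
  exact h1.unique ((hasDerivAt_const x (0:ℝ)).congr_of_eventuallyEq h2)

theorem fubini_kernel {h : ℝ → ℝ} (hh : Integrable h) {k : ℝ → ℝ → ℝ}
    (hk : Measurable (Function.uncurry k)) (hk0 : ∀ u v, 0 ≤ k u v) {c : ENNReal} (hc : c ≠ ⊤)
    (hb : ∀ v, ∫⁻ u, ENNReal.ofReal (k u v) ≤ c) :
    Integrable (fun u => ∫ v, h v * k u v) ∧
    (∫ u, ∫ v, h v * k u v) = ∫ v, h v * (∫⁻ u, ENNReal.ofReal (k u v)).toReal := by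
  have hm : ∀ v, Measurable (fun u => k u v) := fun v => hk.comp (measurable_id.prodMk measurable_const)
  have hval : ∀ v, ∫ u, k u v = (∫⁻ u, ENNReal.ofReal (k u v)).toReal := fun v =>
    integral_eq_lintegral_of_nonneg_ae (Filter.Eventually.of_forall fun u => hk0 u v)
      (hm v).aestronglyMeasurable
  have hmB : Measurable (fun v => ∫⁻ u, ENNReal.ofReal (k u v)) := by
    have : Measurable (fun z : ℝ × ℝ => ENNReal.ofReal (k z.1 z.2)) := ENNReal.measurable_ofReal.comp hk
    exact this.lintegral_prod_left'
  have hint : Integrable (fun z : ℝ × ℝ => h z.2 * k z.1 z.2) (volume.prod volume) := by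
    have hsm : AEStronglyMeasurable (fun z : ℝ × ℝ => h z.2 * k z.1 z.2) (volume.prod volume) :=
      (hh.aestronglyMeasurable.comp_snd).mul hk.aestronglyMeasurable
    rw [integrable_prod_iff' hsm]
    constructor
    · refine Filter.Eventually.of_forall fun v => ?_
      refine Integrable.const_mul ⟨(hm v).aestronglyMeasurable, ?_⟩ (h v)
      rw [hasFiniteIntegral_iff_ofReal (Filter.Eventually.of_forall fun u => hk0 u v)]
      exact (hb v).trans_lt hc.lt_top
    · simp only [norm_mul, integral_const_mul]
      have : ∀ v, ∫ u, ‖k u v‖ = (∫⁻ u, ENNReal.ofReal (k u v)).toReal := by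
        intro v; rw [← hval]; simp only [Real.norm_of_nonneg (hk0 _ _)]
      simp only [this]
      refine hh.norm.mul_bdd (c := c.toReal) hmB.ennreal_toReal.aestronglyMeasurable ?_
      refine Filter.Eventually.of_forall fun v => ?_
      rw [Real.norm_of_nonneg ENNReal.toReal_nonneg]
      exact ENNReal.toReal_mono hc (hb v)
  refine ⟨hint.integral_prod_left, ?_⟩
  rw [integral_integral_swap (f := fun u v => h v * k u v) hint]
  simp only [integral_const_mul, hval]

noncomputable def gE (α : ℝ) (z : ℝ) : ENNReal := ENNReal.ofReal (z ^ (-α) / (1 + z))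

noncomputable def c0 (α : ℝ) : ENNReal := ∫⁻ z in Ioi 0, gE α z

theorem c0_ne_top {α : ℝ} (h0 : 0 < α) (h1 : α < 1) : c0 α ≠ ⊤ := by
  have hu : Ioi (0:ℝ) = Ioo 0 1 ∪ Ici 1 := (Ioo_union_Ici_eq_Ioi zero_lt_one).symm
  have hA : IntegrableOn (fun z : ℝ => z ^ (-α)) (Ioo 0 1) :=
    (intervalIntegral.integrableOn_Ioo_rpow_iff zero_lt_one).2 (by linarith)
  have hB : IntegrableOn (fun z : ℝ => z ^ (-α - 1)) (Ici 1) :=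
    (integrableOn_Ici_iff_integrableOn_Ioi (by simp)).2 (integrableOn_Ioi_rpow_of_lt (by linarith) zero_lt_one)
  unfold c0
  rw [hu]
  refine ((lintegral_union_le _ _ _).trans_lt (ENNReal.add_lt_top.2 ⟨?_, ?_⟩)).ne
  · refine lt_of_le_of_lt ?_ hA.2
    refine setLIntegral_mono' measurableSet_Ioo fun z hz => ?_
    have hz' : 0 < z := hz.1
    rw [Real.enorm_of_nonneg (by positivity)]
    refine ENNReal.ofReal_le_ofReal (div_le_self (by positivity) (by linarith))
  · refine lt_of_le_of_lt ?_ hB.2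
    refine setLIntegral_mono' measurableSet_Ici fun z hz => ?_
    have hz' : 0 < z := lt_of_lt_of_le zero_lt_one hz
    rw [Real.enorm_of_nonneg (by positivity)]
    simp only [Real.rpow_sub_one hz'.ne']
    exact ENNReal.ofReal_le_ofReal (div_le_div_of_nonneg_left (by positivity) hz' (by linarith))

theorem measurable_gE (α : ℝ) : Measurable (gE α) := by unfold gE; fun_prop

theorem c0_pos {α : ℝ} : 0 < (c0 α) := by
  unfold c0
  rw [lintegral_pos_iff_support (measurable_gE α)]
  have : Ioi (0:ℝ) ⊆ Function.support (gE α) := by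
    intro z hz
    have hz' : 0 < z := hz
    simp only [Function.mem_support, gE, ne_eq, ENNReal.ofReal_eq_zero, not_le]
    positivity
  rw [Measure.restrict_apply' measurableSet_Ioi, inter_eq_right.2 this]
  simp

/-- First substitution. -/
theorem subst1 {α x v : ℝ} {S : Set ℝ} (hS : MeasurableSet S) (hSsub : S ⊆ Ioo x v) :
    ∫⁻ u in S, ENNReal.ofReal ((u - x) ^ (-α) * (v - u) ^ (α - 1)) =
      ∫⁻ z in (fun u => (u - x) / (v - u)) '' S, gE α z := by
  rw [lintegral_image_eq_lintegral_abs_deriv_mul (f' := fun u => (v - x) / (v - u) ^ 2) hS]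
  · refine setLIntegral_congr_fun hS fun u hu => ?_
    obtain ⟨h1, h2⟩ := hSsub hu
    have a : 0 < u - x := by linarith
    have b : 0 < v - u := by linarith
    have c : 0 < v - x := by linarith
    simp only [gE]
    rw [← ENNReal.ofReal_mul (abs_nonneg _), abs_of_nonneg (by positivity)]
    congr 1
    rw [Real.div_rpow a.le b.le, Real.rpow_sub_one b.ne', Real.rpow_neg b.le]
    have : 1 + (u - x) / (v - u) = (v - x) / (v - u) := by field_simp; ring
    rw [this]
    have := (Real.rpow_pos_of_pos b α).ne'
    field_simp
  · intro u hu
    obtain ⟨h1, h2⟩ := hSsub hu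
    have b : v - u ≠ 0 := by linarith
    have := ((hasDerivAt_id u).sub_const x).div ((hasDerivAt_id u).const_sub v) b
    refine (this.congr_deriv ?_).hasDerivWithinAt
    simp only [id]
    congr 1; ring
  · intro u hu w hw h
    obtain ⟨h1, h2⟩ := hSsub hu
    obtain ⟨h3, h4⟩ := hSsub hw
    have b : v - u ≠ 0 := by linarith
    have b' : v - w ≠ 0 := by linarith
    simp only [div_eq_div_iff b b'] at h
    have hc : v - x ≠ 0 := by linarith
    have : (v - x) * (u - w) = 0 := by linear_combination h
    rcases mul_eq_zero.1 this with h | h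
    · exact absurd h hc
    · linarith

theorem image1_top {x v : ℝ} (hxv : x < v) :
    (fun u => (u - x) / (v - u)) '' Ioo x v = Ioi 0 := by
  ext z; constructor
  · rintro ⟨u, ⟨h1, h2⟩, rfl⟩
    exact div_pos (sub_pos.2 h1) (sub_pos.2 h2)
  · intro (hz : 0 < z)
    have h1 : 0 < 1 + z := by linarith
    have e1 : (x + z * v) / (1 + z) - x = z * (v - x) / (1 + z) := by field_simp; ring
    have e2 : v - (x + z * v) / (1 + z) = (v - x) / (1 + z) := by field_simp; ring
    have c : 0 < v - x := by linarith
    refine ⟨(x + z * v) / (1 + z), ⟨?_, ?_⟩, ?_⟩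
    · rw [← sub_pos, e1]; positivity
    · rw [← sub_pos, e2]; positivity
    · simp only [e1, e2]; field_simp

theorem image1 {x t v : ℝ} (hxt : x < t) (htv : t < v) :
    (fun u => (u - x) / (v - u)) '' Ioo x t = Ioo 0 ((t - x) / (v - t)) := by
  have d : 0 < v - t := by linarith
  have d2 : 0 < t - x := by linarith
  ext z; constructor
  · rintro ⟨u, ⟨h1, h2⟩, rfl⟩
    refine ⟨div_pos (by linarith) (by linarith), ?_⟩
    exact div_lt_div₀ (by linarith) (by linarith) (by linarith) (by linarith)
  · rintro ⟨hz, hz2⟩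
    rw [lt_div_iff₀ d] at hz2
    have h1 : 0 < 1 + z := by linarith
    have c : 0 < v - x := by linarith
    have e1 : (x + z * v) / (1 + z) - x = z * (v - x) / (1 + z) := by field_simp; ring
    have e2 : v - (x + z * v) / (1 + z) = (v - x) / (1 + z) := by field_simp; ring
    refine ⟨(x + z * v) / (1 + z), ⟨?_, ?_⟩, ?_⟩
    · rw [← sub_pos, e1]; positivity
    · rw [div_lt_iff₀ h1]; linarith
    · simp only [e1, e2]; field_simp

/-- Second substitution. -/
theorem subst2 {α x t v : ℝ} (htv : t < v) :
    ∫⁻ s in Ioo x t, ENNReal.ofReal ((v - t) ^ α * (t - s) ^ (-α) / (v - s)) =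
      ∫⁻ z in Ioo 0 ((t - x) / (v - t)), gE α z := by
  have d : 0 < v - t := by linarith
  have him : (fun s => (t - s) / (v - t)) '' Ioo x t = Ioo 0 ((t - x) / (v - t)) := by
    ext z; constructor
    · rintro ⟨u, ⟨h1, h2⟩, rfl⟩
      exact ⟨div_pos (by linarith) d, div_lt_div_of_pos_right (by linarith) d⟩
    · rintro ⟨hz, hz2⟩
      rw [lt_div_iff₀ d] at hz2
      refine ⟨t - z * (v - t), ⟨by linarith, by nlinarith [mul_pos hz d]⟩, ?_⟩
      simp only []; field_simp; ring
  rw [← him, lintegral_image_eq_lintegral_abs_deriv_mul (f' := fun s => - 1 / (v - t)) measurableSet_Ioo]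
  · refine setLIntegral_congr_fun measurableSet_Ioo fun u hu => ?_
    obtain ⟨h1, h2⟩ := hu
    have a : 0 < t - u := by linarith
    have b : 0 < v - u := by linarith
    simp only [gE]
    rw [← ENNReal.ofReal_mul (abs_nonneg _), abs_div, abs_of_pos d]
    congr 1
    rw [Real.div_rpow a.le d.le, Real.rpow_neg d.le]
    have : 1 + (t - u) / (v - t) = (v - u) / (v - t) := by field_simp; ring
    rw [this]
    have := (Real.rpow_pos_of_pos d α).ne'
    simp
    field_simp
  · intro u hu
    exact (((hasDerivAt_id u).const_sub t).div_const (v - t)).hasDerivWithinAt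
  · intro u hu w hw h
    simp only [div_left_inj' d.ne'] at h
    linarith

noncomputable def k1 (α x u v : ℝ) : ℝ :=
  if x < u ∧ u < v then (u - x) ^ (-α) * (v - u) ^ (α - 1) else 0

noncomputable def k2 (α t x u v : ℝ) : ℝ := if u < t then k1 α x u v else 0

noncomputable def kt (α t s v : ℝ) : ℝ :=
  if s < t ∧ t < v then (v - t) ^ α * (t - s) ^ (-α) / (v - s) else 0

noncomputable def k3 (α t x s v : ℝ) : ℝ := if x < s then kt α t s v else 0

theorem k1_nonneg (α x u v : ℝ) : 0 ≤ k1 α x u v := by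
  unfold k1; split_ifs with h
  · have := sub_pos.2 h.1
    have := sub_pos.2 h.2
    positivity
  · exact le_rfl

theorem k2_nonneg (α t x u v : ℝ) : 0 ≤ k2 α t x u v := by
  unfold k2; split_ifs with h
  · exact k1_nonneg _ _ _ _
  · exact le_rfl

theorem kt_nonneg (α t s v : ℝ) : 0 ≤ kt α t s v := by
  unfold kt; split_ifs with h
  · have := sub_pos.2 h.1
    have := sub_pos.2 h.2
    have := sub_pos.2 (h.1.trans h.2)
    positivity
  · exact le_rfl

theorem k3_nonneg (α t x u v : ℝ) : 0 ≤ k3 α t x u v := by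
  unfold k3; split_ifs with h
  · exact kt_nonneg _ _ _ _
  · exact le_rfl

theorem k1_meas (α x : ℝ) : Measurable (Function.uncurry (k1 α x)) := by
  unfold k1 Function.uncurry
  refine Measurable.ite ?_ (by fun_prop) (by fun_prop)
  exact (measurableSet_lt measurable_const measurable_fst).inter
    (measurableSet_lt measurable_fst measurable_snd)

theorem k2_meas (α t x : ℝ) : Measurable (Function.uncurry (k2 α t x)) :=
  Measurable.ite (measurableSet_lt measurable_fst measurable_const) (k1_meas α x) measurable_const

theorem kt_meas (α t : ℝ) : Measurable (Function.uncurry (kt α t)) := by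
  unfold kt Function.uncurry
  refine Measurable.ite ?_ (by fun_prop) (by fun_prop)
  exact (measurableSet_lt measurable_fst measurable_const).inter
    (measurableSet_lt measurable_const measurable_snd)

theorem k3_meas (α t x : ℝ) : Measurable (Function.uncurry (k3 α t x)) :=
  Measurable.ite (measurableSet_lt measurable_const measurable_fst) (kt_meas α t) measurable_const

theorem lint_ind {k g : ℝ → ℝ} {S : Set ℝ} (hS : MeasurableSet S) (h1 : ∀ u ∈ S, k u = g u)
    (h2 : ∀ u ∉ S, k u = 0) :
    ∫⁻ u, ENNReal.ofReal (k u) = ∫⁻ u in S, ENNReal.ofReal (g u) := by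
  rw [← lintegral_indicator hS]
  congr 1
  ext u
  by_cases hu : u ∈ S
  · simp [hu, h1 u hu]
  · simp [hu, h2 u hu]

theorem B1 (α x v : ℝ) :
    ∫⁻ u, ENNReal.ofReal (k1 α x u v) = if x < v then c0 α else 0 := by
  rw [lint_ind (k := fun u => k1 α x u v) (S := Ioo x v) (g := fun u => (u - x) ^ (-α) * (v - u) ^ (α - 1)) measurableSet_Ioo
    (fun u hu => if_pos hu) (fun u hu => if_neg hu)]
  split_ifs with h
  · rw [subst1 measurableSet_Ioo subset_rfl, image1_top h, c0]
  · rw [Ioo_eq_empty h]; simp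

theorem B3 (α t x v : ℝ) :
    ∫⁻ u, ENNReal.ofReal (k3 α t x u v) =
      if x < t ∧ t < v then ∫⁻ z in Ioo 0 ((t - x) / (v - t)), gE α z else 0 := by
  by_cases h : t < v
  · rw [lint_ind (S := Ioo x t) (g := fun s => (v - t) ^ α * (t - s) ^ (-α) / (v - s))
      measurableSet_Ioo]
    · by_cases h2 : x < t
      · rw [subst2 h, if_pos ⟨h2, h⟩]
      · rw [if_neg (fun h' => h2 h'.1), Ioo_eq_empty h2]; simp
    · intro u hu
      simp [k3, kt, hu.1, hu.2, h]
    · intro u hu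
      unfold k3 kt
      split_ifs with h1 h3
      · exact absurd ⟨h1, h3.1⟩ hu
      · rfl
      · rfl
  · simp [k3, kt, h]

theorem B2 (α t x v : ℝ) :
    ∫⁻ u, ENNReal.ofReal (k2 α t x u v) =
      if x < v ∧ v ≤ t then c0 α else ∫⁻ u, ENNReal.ofReal (k3 α t x u v) := by
  by_cases h : v ≤ t
  · have : ∀ u, k2 α t x u v = k1 α x u v := by
      intro u
      unfold k2 k1
      split_ifs with h1 h2 h3 <;> try rfl
      exact absurd (h3.2.trans_le h) h1
    simp only [this, B1, B3, h, and_true, not_lt.2 h, and_false, if_false]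
  · have h' := not_le.1 h
    simp only [h, and_false, if_false, B3, h', and_true]
    rw [lint_ind (S := Ioo x t) (g := fun u => (u - x) ^ (-α) * (v - u) ^ (α - 1))
      measurableSet_Ioo]
    · split_ifs with h2
      · rw [subst1 measurableSet_Ioo (Ioo_subset_Ioo_right h'.le), image1 h2 h']
      · rw [Ioo_eq_empty h2]; simp
    · intro u hu
      simp [k2, k1, hu.1, hu.2, hu.2.trans h']
    · intro u hu
      unfold k2 k1
      split_ifs with h1 h3
      · exact absurd ⟨h3.1, h1⟩ hu
      · rfl
      · rfl

theorem B3_le (α t x v : ℝ) : ∫⁻ u, ENNReal.ofReal (k3 α t x u v) ≤ c0 α := by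
  rw [B3]; split_ifs
  · exact lintegral_mono_set Ioo_subset_Ioi_self
  · exact zero_le

theorem B2_le (α t x v : ℝ) : ∫⁻ u, ENNReal.ofReal (k2 α t x u v) ≤ c0 α := by
  rw [B2]; split_ifs
  · exact le_rfl
  · exact B3_le _ _ _ _

theorem B1_le (α x v : ℝ) : ∫⁻ u, ENNReal.ofReal (k1 α x u v) ≤ c0 α := by
  rw [B1]; split_ifs
  · exact le_rfl
  · exact zero_le

/-- Identification of the representative. -/
theorem identify {α T t : ℝ} (h0 : 0 < α) (h1 : α < 1) {hφ hψ : ℝ → ℝ}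
    (iφ : Integrable hφ) (iψ : Integrable hψ) (sφ : ∀ v, T ≤ v → hφ v = 0)
    (sψ : ∀ v, T ≤ v → hψ v = 0)
    (hJ : ∀ᵐ u, u ∈ Ioo 0 T → ∫ v in Ioi u, hψ v * (v - u) ^ (α - 1) =
      if u < t then ∫ v in Ioi u, hφ v * (v - u) ^ (α - 1) else 0) :
    ∀ᵐ x, 0 < x → hψ x = (Iic t).indicator hφ x + (∫ v, hφ v * kt α t x v) / (c0 α).toReal := by
  set c := (c0 α).toReal with hc
  have hct := c0_ne_top h0 h1
  have hcpos : 0 < c := ENNReal.toReal_pos c0_pos.ne' hct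
  set M : ℝ → ℝ := fun s => ∫ v, hφ v * kt α t s v with hM
  have f1 := fun x => fubini_kernel iψ (k1_meas α x) (k1_nonneg α x) hct (B1_le α x)
  have f2 := fun x => fubini_kernel iφ (k2_meas α t x) (k2_nonneg α t x) hct (B2_le α t x)
  have f3 := fun x => fubini_kernel iφ (k3_meas α t x) (k3_nonneg α t x) hct (B3_le α t x)
  have e3 : ∀ x, (fun u => ∫ v, hφ v * k3 α t x u v) = (Ioi x).indicator M := by
    intro x; ext u
    by_cases hu : x < u
    · simp [k3, hu, hM]
    · simp [k3, hu]
  have iM : ∀ x, Integrable ((Ioi x).indicator M) := fun x => e3 x ▸ (f3 x).1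
  have kI : ∀ (h : ℝ → ℝ) (x u : ℝ), x < u → ∫ v, h v * k1 α x u v =
      (u - x) ^ (-α) * ∫ v in Ioi u, h v * (v - u) ^ (α - 1) := by
    intro h x u hu
    rw [← integral_const_mul, ← integral_indicator measurableSet_Ioi]
    congr 1; ext v
    by_cases hv : u < v
    · simp [k1, hu, hv]; ring
    · simp [k1, hv]
  have key : ∀ x, 0 ≤ x → (∫ u, ∫ v, hψ v * k1 α x u v) = ∫ u, ∫ v, hφ v * k2 α t x u v := by
    intro x hx
    refine integral_congr_ae ?_
    filter_upwards [hJ] with u hu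
    by_cases hxu : x < u
    · by_cases huT : u < T
      · have := hu ⟨hx.trans_lt hxu, huT⟩
        simp only [kI hψ x u hxu, this]
        by_cases hut : u < t
        · simp only [k2, hut, if_true, kI hφ x u hxu]
        · simp [k2, hut]
      · have z : ∀ v, k1 α x u v ≠ 0 → T ≤ v := by
          intro v hv
          by_contra hcon
          apply hv
          unfold k1
          rw [if_neg]
          intro h'
          linarith [h'.2]
        have a1 : ∀ v, hψ v * k1 α x u v = 0 := by
          intro v
          by_cases hk : k1 α x u v = 0
          · simp [hk]
          · simp [sψ v (z v hk)]
        have a2 : ∀ v, hφ v * k2 α t x u v = 0 := by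
          intro v
          by_cases hk : k1 α x u v = 0
          · simp [k2, hk]
          · simp [sφ v (z v hk)]
        simp [a1, a2]
    · simp [k1, k2, hxu]
  have main : ∀ x, 0 ≤ x → ∫ u in Ioi x, hψ u =
      (∫ u in Ioi x, (Iic t).indicator hφ u) + (∫ u in Ioi x, M u) / c := by
    intro x hx
    have E := key x hx
    rw [(f1 x).2, (f2 x).2] at E
    have L : ∫ v, hψ v * (∫⁻ u, ENNReal.ofReal (k1 α x u v)).toReal = c * ∫ u in Ioi x, hψ u := by
      rw [← integral_const_mul, ← integral_indicator measurableSet_Ioi]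
      congr 1; ext v
      rw [B1]
      by_cases hv : x < v
      · simp [hv, hc, mul_comm]
      · simp [hv]
    have R : ∀ v, hφ v * (∫⁻ u, ENNReal.ofReal (k2 α t x u v)).toReal =
        c * (Ioi x).indicator ((Iic t).indicator hφ) v +
          hφ v * (∫⁻ u, ENNReal.ofReal (k3 α t x u v)).toReal := by
      intro v
      rw [B2]
      by_cases hv : x < v ∧ v ≤ t
      · rw [if_pos hv, B3, if_neg (by intro h; linarith [hv.2, h.2])]
        simp [hv.1, hv.2, hc, mul_comm]
      · rw [if_neg hv]
        have : (Ioi x).indicator ((Iic t).indicator hφ) v = 0 := by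
          by_cases h1 : x < v
          · have : ¬ v ≤ t := fun h => hv ⟨h1, h⟩
            simp [this]
          · simp [h1]
        rw [this]; simp
    have i3 : Integrable fun v => hφ v * (∫⁻ u, ENNReal.ofReal (k3 α t x u v)).toReal := by
      refine iφ.mul_bdd (c := c) ?_ ?_
      · have : Measurable (fun z : ℝ × ℝ => ENNReal.ofReal (k3 α t x z.1 z.2)) :=
          ENNReal.measurable_ofReal.comp (k3_meas α t x)
        exact this.lintegral_prod_left'.ennreal_toReal.aestronglyMeasurable
      · refine Filter.Eventually.of_forall fun v => ?_
        rw [Real.norm_of_nonneg ENNReal.toReal_nonneg]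
        exact ENNReal.toReal_mono hct (B3_le α t x v)
    rw [L] at E
    simp only [R] at E
    rw [integral_add (((iφ.indicator measurableSet_Iic).indicator measurableSet_Ioi).const_mul c) i3,
      integral_const_mul, integral_indicator measurableSet_Ioi, ← (f3 x).2, e3 x,
      integral_indicator measurableSet_Ioi] at E
    field_simp
    linarith
  have := ae_zero_of_tail (F := fun s => hψ s - ((Iic t).indicator hφ s + (Ioi 0).indicator M s / c))
    (iψ.sub ((iφ.indicator measurableSet_Iic).add ((iM 0).div_const c))) (by
      intro x hx
      have i1 := (iφ.indicator (measurableSet_Iic (a := t))).integrableOn (s := Ioi x)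
      have i2 := ((iM 0).div_const c).integrableOn (s := Ioi x)
      have i12 : IntegrableOn (fun u => (Iic t).indicator hφ u + (Ioi 0).indicator M u / c) (Ioi x) :=
        i1.add i2
      rw [integral_sub iψ.integrableOn i12, integral_add i1 i2, main x hx, integral_div]
      have : ∫ u in Ioi x, (Ioi 0).indicator M u = ∫ u in Ioi x, M u := by
        refine setIntegral_congr_fun measurableSet_Ioi fun u hu => ?_
        exact indicator_of_mem (hx.trans_lt hu : (0:ℝ) < u) M
      rw [this]; ring)
  filter_upwards [this] with x hx hx0
  have := hx hx0
  rw [indicator_of_mem (show x ∈ Ioi (0:ℝ) from hx0)] at this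
  linarith

theorem lint_shift {a s t : ℝ} (ha : a < -1) (hst : s < t) :
    ∫⁻ v in Ioi t, ENNReal.ofReal ((v - s) ^ a) =
      ENNReal.ofReal ((t - s) ^ (a + 1) / (-(a + 1))) := by
  have h1 : ∫⁻ v in Ioi t, ENNReal.ofReal ((v - s) ^ a) =
      ∫⁻ w in Ioi (t - s), ENNReal.ofReal (w ^ a) := by
    rw [← lintegral_indicator measurableSet_Ioi, ← lintegral_indicator measurableSet_Ioi,
      ← lintegral_sub_right_eq_self ((Ioi (t - s)).indicator _) s]
    congr 1; ext v
    by_cases hv : t < v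
    · simp [indicator, hv]
    · simp [indicator, hv]
  have hts : 0 < t - s := by linarith
  rw [h1, ← ofReal_integral_eq_lintegral_ofReal (integrableOn_Ioi_rpow_of_lt ha hts),
    integral_Ioi_rpow_of_lt ha hts]
  · congr 1; rw [div_neg, neg_div]
  · filter_upwards [ae_restrict_mem measurableSet_Ioi] with w hw
    have : 0 < w := hts.trans hw
    simp only [Pi.zero_apply]; positivity

theorem weight_bound {T t p p' : ℝ} (hT : 0 < T) (htT : t ≤ T) (hp : 0 < p') (hpp : p' < p) :
    eLpNorm ((Iio t).indicator fun x => (t - x) ^ (-(1 / p))) (ENNReal.ofReal p')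
      (volume.restrict (Icc 0 T)) ≤
      (∫⁻ y in Ioo 0 T, ENNReal.ofReal (y ^ (-(p' / p)))) ^ (1 / p') ∧
    (∫⁻ y in Ioo 0 T, ENNReal.ofReal (y ^ (-(p' / p)))) ^ (1 / p') ≠ ⊤ := by
  have hp0 : 0 < p := hp.trans hpp
  constructor
  · rw [eLpNorm_eq_lintegral_rpow_enorm_toReal (by simpa using hp) (by simp),
      ENNReal.toReal_ofReal hp.le]
    refine ENNReal.rpow_le_rpow ?_ (by positivity)
    rw [← lintegral_indicator measurableSet_Icc, ← lintegral_indicator measurableSet_Ioo,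
      ← lintegral_sub_left_eq_self ((Ioo 0 T).indicator _) t]
    have h0 : ∀ᵐ x : ℝ, x ≠ t - T := by simp [ae_iff]
    refine lintegral_mono_ae ?_
    filter_upwards [h0] with x hx0
    by_cases hx : x ∈ Icc 0 T
    · rw [indicator_of_mem hx]
      by_cases hxt : x < t
      · have h1 : 0 < t - x := sub_pos.2 hxt
        have h2 : t - x < T := by
          refine lt_of_le_of_ne (by linarith [hx.1]) ?_
          intro h; apply hx0; linarith
        rw [indicator_of_mem (show x ∈ Iio t from hxt), indicator_of_mem (show t - x ∈ Ioo 0 T from ⟨h1, h2⟩),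
          Real.enorm_of_nonneg (by positivity), ENNReal.ofReal_rpow_of_nonneg (by positivity) hp.le,
          ← Real.rpow_mul h1.le]
        apply le_of_eq; congr 2; field_simp
      · rw [indicator_of_notMem (show x ∉ Iio t from hxt)]
        simp [hp]
    · rw [indicator_of_notMem hx]; exact zero_le
  · refine ENNReal.rpow_ne_top_of_nonneg (by positivity) ?_
    have h1 : p' / p < 1 := (div_lt_one hp0).2 hpp
    have hA : IntegrableOn (fun z : ℝ => z ^ (-(p' / p))) (Ioo 0 T) :=
      (intervalIntegral.integrableOn_Ioo_rpow_iff hT).2 (by linarith)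
    refine (lt_of_le_of_lt ?_ hA.2).ne
    refine setLIntegral_mono' measurableSet_Ioo fun z hz => ?_
    have hz' : 0 < z := hz.1
    rw [Real.enorm_of_nonneg (by positivity)]

theorem kernel_bound {T α p q s t : ℝ} (hα : 0 < α) (hpq : p.HolderConjugate q)
    (hap : α < 1 / p) (hs : 0 < s) (hst : s < t) {φ : ℝ → ℝ}
    (hφ : AEStronglyMeasurable φ (volume.restrict (Icc 0 T))) :
    ‖s ^ α * ∫ v, (Ioo 0 T).indicator (fun v => v ^ (-α) * φ v) v * kt α t s v‖ₑ ≤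
      eLpNorm φ (ENNReal.ofReal p) (volume.restrict (Icc 0 T)) *
        ENNReal.ofReal ((1 / ((1 - α) * q - 1)) ^ (1 / q) * (t - s) ^ (-(1 / p))) := by
  have hp0 : 0 < p := hpq.pos
  have hq0 : 0 < q := hpq.symm.pos
  have hts : 0 < t - s := sub_pos.2 hst
  have hinv : 1 / p + 1 / q = 1 := by simpa using hpq.inv_add_inv_eq_one
  have ha : (α - 1) * q < -1 := by
    have : 1 / q * q = 1 := by field_simp
    nlinarith
  set W : ℝ → ENNReal := (Ioi t).indicator fun v =>
    ENNReal.ofReal ((t - s) ^ (-α) * (v - s) ^ (α - 1)) with hW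
  have hWm : Measurable W := by
    refine Measurable.indicator ?_ measurableSet_Ioi
    fun_prop
  have step1 : ‖s ^ α * ∫ v, (Ioo 0 T).indicator (fun v => v ^ (-α) * φ v) v * kt α t s v‖ₑ ≤
      ∫⁻ v in Icc 0 T, ‖φ v‖ₑ * W v := by
    rw [← integral_const_mul]
    refine (enorm_integral_le_lintegral_enorm _).trans ?_
    rw [← lintegral_indicator measurableSet_Icc]
    refine lintegral_mono fun v => ?_
    by_cases hv : v ∈ Ioo 0 T ∧ t < v
    · obtain ⟨hv, htv⟩ := hv
      have hv0 : 0 < v := hv.1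
      have a1 : 0 < v - t := sub_pos.2 htv
      have a2 : 0 < v - s := by linarith
      rw [indicator_of_mem hv, indicator_of_mem (Ioo_subset_Icc_self hv), hW,
        indicator_of_mem (show v ∈ Ioi t from htv), ← ofReal_norm, ← ofReal_norm,
        ← ENNReal.ofReal_mul (norm_nonneg _)]
      refine ENNReal.ofReal_le_ofReal ?_
      simp only [kt, hst, htv, and_self, if_true]
      have b1 : s ^ α * v ^ (-α) ≤ 1 := by
        rw [Real.rpow_neg hv0.le, ← div_eq_mul_inv, div_le_one (by positivity)]
        exact Real.rpow_le_rpow hs.le (by linarith) hα.le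
      have b2 : (v - t) ^ α / (v - s) ≤ (v - s) ^ (α - 1) := by
        rw [Real.rpow_sub_one a2.ne']
        exact div_le_div_of_nonneg_right (Real.rpow_le_rpow a1.le (by linarith) hα.le) a2.le
      have e : s ^ α * (v ^ (-α) * φ v * ((v - t) ^ α * (t - s) ^ (-α) / (v - s))) =
        φ v * ((s ^ α * v ^ (-α)) * ((t - s) ^ (-α) * ((v - t) ^ α / (v - s)))) := by ring
      rw [e, norm_mul, Real.norm_of_nonneg (r := _ * _) (by positivity)]
      refine mul_le_mul_of_nonneg_left ?_ (norm_nonneg _)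
      calc (s ^ α * v ^ (-α)) * ((t - s) ^ (-α) * ((v - t) ^ α / (v - s)))
          ≤ 1 * ((t - s) ^ (-α) * (v - s) ^ (α - 1)) := by gcongr
        _ = _ := one_mul _
    · have : (Ioo 0 T).indicator (fun v => v ^ (-α) * φ v) v * kt α t s v = 0 := by
        by_cases h1 : v ∈ Ioo 0 T
        · have h2 : ¬ t < v := fun h => hv ⟨h1, h⟩
          simp [kt, h2]
        · rw [indicator_of_notMem h1, zero_mul]
      rw [this]; simp
  refine step1.trans ?_
  refine (ENNReal.lintegral_mul_le_Lp_mul_Lq _ hpq hφ.enorm hWm.aemeasurable).trans ?_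
  rw [eLpNorm_eq_lintegral_rpow_enorm_toReal (by simpa using hp0) (by simp),
      ENNReal.toReal_ofReal hp0.le]
  refine mul_le_mul_right ?_ _
  have hW2 : ∫⁻ v in Icc 0 T, W v ^ q ≤
      ENNReal.ofReal ((t - s) ^ (-α * q) * ((t - s) ^ ((α - 1) * q + 1) / (-((α - 1) * q + 1)))) := by
    rw [ENNReal.ofReal_mul (by positivity), ← lint_shift ha hst,
      ← lintegral_const_mul' _ _ ENNReal.ofReal_ne_top]
    refine (lintegral_mono' Measure.restrict_le_self le_rfl).trans ?_
    rw [← lintegral_indicator measurableSet_Ioi]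
    refine lintegral_mono fun v => ?_
    by_cases hv : t < v
    · have a2 : 0 < v - s := by linarith
      rw [hW, indicator_of_mem (show v ∈ Ioi t from hv), indicator_of_mem (show v ∈ Ioi t from hv),
        ENNReal.ofReal_rpow_of_nonneg (by positivity) hq0.le, Real.mul_rpow (by positivity) (by positivity),
        ← Real.rpow_mul hts.le, ← Real.rpow_mul a2.le, ENNReal.ofReal_mul (by positivity)]
    · rw [hW, indicator_of_notMem (show v ∉ Ioi t from hv), ENNReal.zero_rpow_of_pos hq0]
      exact zero_le
  refine (ENNReal.rpow_le_rpow hW2 (by positivity)).trans ?_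
  have hD : 0 < (1 - α) * q - 1 := by linarith
  have e1 : -((α - 1) * q + 1) = (1 - α) * q - 1 := by ring
  rw [e1, ENNReal.ofReal_rpow_of_nonneg (by positivity) (by positivity)]
  apply le_of_eq
  congr 1
  rw [mul_div_assoc', ← Real.rpow_add hts, div_eq_mul_one_div,
    Real.mul_rpow (by positivity) (by positivity), ← Real.rpow_mul hts.le, mul_comm]
  congr 2
  have : 1 / p = 1 - 1 / q := by linarith
  rw [this]; field_simp; ring

theorem integrable_h {T α : ℝ} (hT : 0 < T) (hα2 : α < 1 / 2) {φ : ℝ → ℝ}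
    (hφ : MemLp φ 2 (volume.restrict (Icc 0 T))) :
    Integrable ((Ioo 0 T).indicator fun v => v ^ (-α) * φ v) := by
  rw [integrable_indicator_iff measurableSet_Ioo]
  have h1 : MemLp (fun v : ℝ => v ^ (-α)) 2 (volume.restrict (Ioo 0 T)) := by
    rw [memLp_two_iff_integrable_sq (by fun_prop)]
    have hA : IntegrableOn (fun z : ℝ => z ^ (-α * 2)) (Ioo 0 T) :=
      (intervalIntegral.integrableOn_Ioo_rpow_iff hT).2 (by linarith)
    refine hA.congr_fun (fun z hz => ?_) measurableSet_Ioo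
    simp only []
    rw [Real.rpow_mul hz.1.le]; norm_cast
  have h2 : MemLp φ 2 (volume.restrict (Ioo 0 T)) :=
    hφ.mono_measure (Measure.restrict_mono Ioo_subset_Icc_self le_rfl)
  exact h1.integrable_mul h2

theorem frac_eq {T α u : ℝ} (hu : 0 < u) (φ : ℝ → ℝ) :
    fracInt T α (fun s => s ^ (-α) * φ s) u = (1 / Real.Gamma α) *
      ∫ v in Ioi u, (Ioo 0 T).indicator (fun v => v ^ (-α) * φ v) v * (v - u) ^ (α - 1) := by
  unfold fracInt
  congr 1
  rw [← integral_indicator measurableSet_Ioo, ← integral_indicator measurableSet_Ioi]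
  congr 1; ext v
  by_cases h1 : u < v
  · have h0 : 0 < v := hu.trans h1
    by_cases h2 : v < T
    · simp [indicator, h1, h2, h0]
    · simp [indicator, h2]
  · simp [indicator, h1]

/-- Lemma 2.3 (norm estimate): for `α ∈ (0,1/2)`, `p ∈ (2,1/α)`, `p' ∈ [2,p)` there is a
constant `C = C(α,p,p',T)` such that for every `t ∈ [0,T]` and every `f ∈ Λ^α_T` with
representative `φ_f ∈ L^p([0,T])`, the representative `ψ` of `f·1_{[0,t]} ∈ Λ^α_T` satisfies
`‖ψ‖_{L^{p'}} ≤ C ‖φ_f‖_{L^p}`. -/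
theorem indicator_rep_norm_bound (T α p p' : ℝ) (hT : 0 < T)
    (hα : α ∈ Set.Ioo (0 : ℝ) (1 / 2)) (hp : p ∈ Set.Ioo 2 (1 / α))
    (hp' : p' ∈ Set.Ico 2 p) :
    ∃ C : ℝ, 0 < C ∧ ∀ t ∈ Set.Icc 0 T, ∀ f φ ψ : ℝ → ℝ,
      memLambda T α f φ →
      MemLp φ (ENNReal.ofReal p) (volume.restrict (Set.Icc 0 T)) →
      memLambda T α (Set.indicator (Set.Icc 0 t) f) ψ →
      eLpNorm ψ (ENNReal.ofReal p') (volume.restrict (Set.Icc 0 T)) ≤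
        ENNReal.ofReal C * eLpNorm φ (ENNReal.ofReal p) (volume.restrict (Set.Icc 0 T)) := by
  obtain ⟨hα0, hα2⟩ := hα
  obtain ⟨hp2, hpα⟩ := hp
  obtain ⟨hp'2, hpp⟩ := hp'
  have hp0 : 0 < p := by linarith
  have hp'0 : 0 < p' := by linarith
  have hα1 : α < 1 := by linarith
  have hap : α < 1 / p := by
    rw [lt_div_iff₀ hp0]; rw [lt_div_iff₀ hα0] at hpα; linarith
  have hpq : p.HolderConjugate p.conjExponent := Real.HolderConjugate.conjExponent (by linarith)
  set q := p.conjExponent with hq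
  set c := (c0 α).toReal with hc
  have hcpos : 0 < c := ENNReal.toReal_pos c0_pos.ne' (c0_ne_top hα0 hα1)
  set D := (1 / ((1 - α) * q - 1)) ^ (1 / q) with hD
  have hq0 : 0 < q := hpq.symm.pos
  have hD0 : 0 ≤ D := by
    have hinv : 1 / p + 1 / q = 1 := by simpa using hpq.inv_add_inv_eq_one
    have : 1 / q * q = 1 := by field_simp
    have : 0 < (1 - α) * q - 1 := by nlinarith
    positivity
  set R := (∫⁻ y in Ioo 0 T, ENNReal.ofReal (y ^ (-(p' / p)))) ^ (1 / p') with hR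
  have hRt : R ≠ ⊤ := (weight_bound hT le_rfl hp'0 hpp).2
  refine ⟨T ^ (1 / p' - 1 / p) + D / c * R.toReal, by positivity, ?_⟩
  intro t ht f φ ψ hfφ hφp hfψ
  set μ := volume.restrict (Icc 0 T) with hμ
  set E := eLpNorm φ (ENNReal.ofReal p) μ with hE
  have hEt : E ≠ ⊤ := hφp.2.ne
  have hΓ : 0 < Real.Gamma α := Real.Gamma_pos_of_pos hα0
  have hJ : ∀ᵐ u, u ∈ Ioo 0 T →
      ∫ v in Ioi u, (Ioo 0 T).indicator (fun v => v ^ (-α) * ψ v) v * (v - u) ^ (α - 1) =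
      if u < t then ∫ v in Ioi u, (Ioo 0 T).indicator (fun v => v ^ (-α) * φ v) v * (v - u) ^ (α - 1)
      else 0 := by
    have hne : ∀ᵐ u : ℝ, u ≠ t := by simp [ae_iff]
    have e1 := (ae_restrict_iff' measurableSet_Icc).1 hfφ.2
    have e2 := (ae_restrict_iff' measurableSet_Icc).1 hfψ.2
    filter_upwards [hne, e1, e2] with u hut h1 h2 hu
    have hu0 : 0 < u := hu.1
    have h1 := h1 (Ioo_subset_Icc_self hu)
    have h2 := h2 (Ioo_subset_Icc_self hu)
    rw [frac_eq hu0] at h1 h2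
    have hua : 0 < u ^ α := by positivity
    by_cases hlt : u < t
    · rw [indicator_of_mem (show u ∈ Icc 0 t from ⟨hu0.le, hlt.le⟩), h1] at h2
      rw [if_pos hlt]
      have h3 := mul_left_cancel₀ hua.ne' h2
      exact (mul_left_cancel₀ (by positivity) h3).symm
    · rw [indicator_of_notMem (fun h => hut (le_antisymm h.2 (not_lt.1 hlt)))] at h2
      rw [if_neg hlt]
      have h3 := (mul_eq_zero.1 h2.symm).resolve_left hua.ne'
      exact (mul_eq_zero.1 h3).resolve_left (by positivity)
  have hid := identify hα0 hα1 (integrable_h hT hα2 hfφ.1) (integrable_h hT hα2 hfψ.1)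
    (fun v hv => indicator_of_notMem (fun h => not_lt.2 hv h.2) _)
    (fun v hv => indicator_of_notMem (fun h => not_lt.2 hv h.2) _) hJ
  have hbound : ∀ᵐ x ∂μ, ‖ψ x‖ ≤ ‖φ x‖ +
      (E.toReal * (D / c)) * (Iio t).indicator (fun x => (t - x) ^ (-(1 / p))) x := by
    rw [hμ, ae_restrict_iff' measurableSet_Icc]
    have hne0 : ∀ᵐ u : ℝ, u ≠ 0 := by simp [ae_iff]
    have hneT : ∀ᵐ u : ℝ, u ≠ T := by simp [ae_iff]
    filter_upwards [hid, hne0, hneT] with x hx h0 h1 hxI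
    have hx0 : 0 < x := lt_of_le_of_ne hxI.1 (Ne.symm h0)
    have hxT : x < T := lt_of_le_of_ne hxI.2 h1
    have hxa : 0 < x ^ α := by positivity
    have hx := hx hx0
    have hmem : x ∈ Ioo 0 T := ⟨hx0, hxT⟩
    rw [indicator_of_mem hmem] at hx
    have hcan : x ^ α * x ^ (-α) = 1 := by
      rw [← Real.rpow_add hx0]; simp
    have hψx : ψ x = x ^ α * (x ^ (-α) * ψ x) := by
      rw [← mul_assoc, hcan, one_mul]
    set M := ∫ v, (Ioo 0 T).indicator (fun v => v ^ (-α) * φ v) v * kt α t x v with hM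
    have hφx : ‖x ^ α * (Iic t).indicator ((Ioo 0 T).indicator fun v => v ^ (-α) * φ v) x‖ ≤ ‖φ x‖ := by
      by_cases hxt : x ≤ t
      · rw [indicator_of_mem (show x ∈ Iic t from hxt), indicator_of_mem hmem, ← mul_assoc, hcan,
          one_mul]
      · rw [indicator_of_notMem (show x ∉ Iic t from hxt)]; simp
    have hMx : ‖x ^ α * M‖ ≤ E.toReal * (D * (Iio t).indicator (fun x => (t - x) ^ (-(1 / p))) x) := by
      by_cases hxt : x < t
      · have := kernel_bound (T := T) hα0 hpq hap hx0 hxt hφp.1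
        rw [indicator_of_mem (show x ∈ Iio t from hxt)]
        have hts : 0 < t - x := sub_pos.2 hxt
        have h3 := ENNReal.toReal_mono (ENNReal.mul_ne_top hEt ENNReal.ofReal_ne_top) this
        rwa [toReal_enorm, ENNReal.toReal_mul, ENNReal.toReal_ofReal (by positivity)] at h3
      · have : M = 0 := by simp [hM, kt, hxt]
        rw [this, indicator_of_notMem (show x ∉ Iio t from hxt)]; simp
    rw [hψx, hx, mul_add, ← mul_div_assoc]
    refine (norm_add_le _ _).trans (add_le_add hφx ?_)
    rw [norm_div, Real.norm_of_nonneg hcpos.le, div_le_iff₀ hcpos]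
    refine hMx.trans (le_of_eq ?_)
    field_simp
  have hp'1 : 1 ≤ ENNReal.ofReal p' := by
    rw [← ENNReal.ofReal_one]; exact ENNReal.ofReal_le_ofReal (by linarith)
  have hrm : Measurable ((Iio t).indicator fun x => (t - x) ^ (-(1 / p))) :=
    Measurable.indicator (by fun_prop) measurableSet_Iio
  have hA : eLpNorm φ (ENNReal.ofReal p') μ ≤ E * ENNReal.ofReal (T ^ (1 / p' - 1 / p)) := by
    have := eLpNorm_le_eLpNorm_mul_rpow_measure_univ
      (ENNReal.ofReal_le_ofReal hpp.le) hφp.1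
    rwa [ENNReal.toReal_ofReal hp'0.le, ENNReal.toReal_ofReal hp0.le, hμ, Measure.restrict_apply_univ,
      Real.volume_Icc, sub_zero, ENNReal.ofReal_rpow_of_pos hT] at this
  have hB := (weight_bound (t := t) hT ht.2 hp'0 hpp).1
  calc eLpNorm ψ (ENNReal.ofReal p') μ
      ≤ eLpNorm (fun x => ‖φ x‖ +
        (E.toReal * (D / c)) * (Iio t).indicator (fun x => (t - x) ^ (-(1 / p))) x)
          (ENNReal.ofReal p') μ := eLpNorm_mono_ae_real hbound
    _ ≤ eLpNorm (fun x => ‖φ x‖) (ENNReal.ofReal p') μ +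
        eLpNorm ((E.toReal * (D / c)) • (Iio t).indicator (fun x => (t - x) ^ (-(1 / p))))
          (ENNReal.ofReal p') μ :=
        eLpNorm_add_le (g := (E.toReal * (D / c)) • (Iio t).indicator (fun x => (t - x) ^ (-(1 / p))))
          hφp.1.norm (hrm.const_smul _).aestronglyMeasurable hp'1
    _ ≤ E * ENNReal.ofReal (T ^ (1 / p' - 1 / p)) + ENNReal.ofReal (E.toReal * (D / c)) * R := by
        rw [eLpNorm_norm, eLpNorm_const_smul, Real.enorm_of_nonneg (by positivity)]
        gcongr
    _ = _ := by
        rw [ENNReal.ofReal_add (by positivity) (by positivity),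
          ENNReal.ofReal_mul (ENNReal.toReal_nonneg), ENNReal.ofReal_toReal hEt,
          ENNReal.ofReal_mul (by positivity), ENNReal.ofReal_toReal hRt]
        ring
end

section
/- Let α ∈ (0,1/2), let f ∈ Λ^α_T, and let g : [0,T] → ℝ be Hölder continuous with exponent β > α. Then the product g·f also belongs to Λ^α_T. -/
open MeasureTheory Real Set

/-- Truncated power kernel `r ↦ r_+^{a-1}`. -/
noncomputable def pk (a r : ℝ) : ℝ := if 0 < r then r ^ (a - 1) else 0

lemma pk_nonneg (a r : ℝ) : 0 ≤ pk a r := by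
  unfold pk; split_ifs with h
  · positivity
  · exact le_rfl

lemma pk_pos_eq {a r : ℝ} (h : 0 < r) : pk a r = r ^ (a - 1) := by simp [pk, h]

lemma pk_nonpos_eq {a r : ℝ} (h : r ≤ 0) : pk a r = 0 := by simp [pk, not_lt.2 h]

lemma measurable_pk (a : ℝ) : Measurable (pk a) := by
  unfold pk
  exact Measurable.ite measurableSet_Ioi (by fun_prop) measurable_const

@[fun_prop]
lemma Measurable.pk_comp {X : Type*} [MeasurableSpace X] (a : ℝ) {q : X → ℝ} (hq : Measurable q) :
    Measurable (fun x => pk a (q x)) := (measurable_pk a).comp hq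

lemma pk_mul_rpow {a b r : ℝ} : pk a r * |r| ^ b = pk (a + b) r := by
  unfold pk; split_ifs with h
  · rw [abs_of_pos h, ← rpow_add h]; ring_nf
  · simp

noncomputable def Bt (a b : ℝ) : ENNReal :=
  ∫⁻ x : ℝ, ENNReal.ofReal (pk a (1 - x) * pk b x)

lemma Bt_lt_top {a b : ℝ} (ha : 0 < a) (hb : 0 < b) : Bt a b < ⊤ := by
  have h1 : IntegrableOn (fun x : ℝ => pk a (1 - x) * pk b x) (Ioc 0 (1/2)) := by
    have h := (intervalIntegral.intervalIntegrable_rpow' (a := 0) (b := 1/2)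
      (r := b - 1) (by linarith)).1
    have h2 : IntegrableOn (fun x : ℝ => (1 - x) ^ (a - 1) * x ^ (b - 1)) (Ioc 0 (1/2)) := by
      refine IntegrableOn.continuousOn_mul_of_subset ?_ h isCompact_Icc
        measurableSet_Ioc Ioc_subset_Icc_self
      refine ContinuousOn.rpow_const (by fun_prop) ?_
      intro x hx; left; have := hx.2; linarith
    refine h2.congr_fun ?_ measurableSet_Ioc
    intro x hx
    simp only
    rw [pk_pos_eq (by linarith [hx.2]), pk_pos_eq hx.1]
  have h3 : IntegrableOn (fun x : ℝ => pk a (1 - x) * pk b x) (Ioo (1/2) 1) := by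
    have h := ((intervalIntegral.intervalIntegrable_rpow' (a := 1/2) (b := 0)
      (r := a - 1) (by linarith)).comp_sub_left 1).1
    norm_num at h
    have h2 : IntegrableOn (fun x : ℝ => x ^ (b - 1) * (1 - x) ^ (a - 1)) (Ioc (1/2) 1) := by
      refine IntegrableOn.continuousOn_mul_of_subset ?_ h isCompact_Icc
        measurableSet_Ioc Ioc_subset_Icc_self
      refine ContinuousOn.rpow_const (by fun_prop) ?_
      intro x hx; left; have := hx.1; norm_num at *; linarith
    refine (h2.mono_set Ioo_subset_Ioc_self).congr_fun ?_ measurableSet_Ioo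
    intro x hx
    have := hx.1
    simp only
    rw [pk_pos_eq (by linarith [hx.2]), pk_pos_eq (by norm_num at *; linarith), mul_comm]
  have h4 := h1.union h3
  have h5 : Integrable (fun x : ℝ => pk a (1 - x) * pk b x) := by
    refine (integrableOn_iff_integrable_of_support_subset ?_).1 h4
    intro x hx
    have hx0 : 0 < x := by
      by_contra hh; exact hx (by simp [pk_nonpos_eq (not_lt.1 hh)])
    have hx1 : x < 1 := by
      by_contra hh; exact hx (by simp [pk_nonpos_eq (show 1 - x ≤ 0 by linarith)])
    rcases le_or_gt x (1/2) with h | h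
    · exact Or.inl ⟨hx0, h⟩
    · exact Or.inr ⟨h, hx1⟩
  exact h5.lintegral_lt_top

lemma pk_scale {a c r : ℝ} (hc : 0 < c) : pk a (c * r) = c ^ (a - 1) * pk a r := by
  rcases le_or_gt r 0 with h | h
  · rw [pk_nonpos_eq h, pk_nonpos_eq (mul_nonpos_of_nonneg_of_nonpos hc.le h), mul_zero]
  · rw [pk_pos_eq h, pk_pos_eq (mul_pos hc h), mul_rpow hc.le h.le]

lemma beta_conv (a b s t : ℝ) :
    ∫⁻ v : ℝ, ENNReal.ofReal (pk a (s - v) * pk b (v - t))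
      = Bt a b * ENNReal.ofReal (pk (a + b) (s - t)) := by
  rcases le_or_gt s t with h | h
  · rw [pk_nonpos_eq (show s - t ≤ 0 by linarith)]
    simp only [ENNReal.ofReal_zero, mul_zero]
    rw [lintegral_eq_zero_iff' (by fun_prop)]
    refine Filter.Eventually.of_forall fun v => ?_
    rcases le_or_gt s v with h' | h'
    · simp [pk_nonpos_eq (show s - v ≤ 0 by linarith)]
    · simp [pk_nonpos_eq (show v - t ≤ 0 by linarith)]
  · have hc : 0 < s - t := by linarith
    have hder : ∀ x ∈ (univ : Set ℝ), HasDerivWithinAt (fun x : ℝ => t + (s - t) * x)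
        (s - t) univ x := by
      intro x _
      have := (((hasDerivAt_id x).const_mul (s - t)).const_add t)
      exact (this.congr_deriv (by simp)).hasDerivWithinAt
    have hinj : InjOn (fun x : ℝ => t + (s - t) * x) univ := by
      intro x _ y _ hxy
      simp only [add_right_inj] at hxy
      exact mul_left_cancel₀ hc.ne' hxy
    have himg : (fun x : ℝ => t + (s - t) * x) '' univ = univ := by
      refine eq_univ_of_forall fun y => ⟨(y - t) / (s - t), trivial, ?_⟩
      simp only; field_simp; ring
    have key := lintegral_image_eq_lintegral_abs_deriv_mul MeasurableSet.univ hder hinj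
      (fun v => ENNReal.ofReal (pk a (s - v) * pk b (v - t)))
    rw [himg] at key
    simp only [Measure.restrict_univ] at key
    rw [key, Bt, ← lintegral_mul_const' _ _ ENNReal.ofReal_ne_top]
    congr 1 with x
    rw [← ENNReal.ofReal_mul (abs_nonneg _), ← ENNReal.ofReal_mul
      (mul_nonneg (pk_nonneg _ _) (pk_nonneg _ _))]
    congr 1
    rw [show s - (t + (s - t) * x) = (s - t) * (1 - x) by ring,
      show t + (s - t) * x - t = (s - t) * x by ring, pk_scale hc, pk_scale hc, abs_of_pos hc,
      pk_pos_eq hc, show a + b - 1 = 1 + (a - 1) + (b - 1) by ring, rpow_add hc, rpow_add hc,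
      rpow_one]
    ring

lemma inner_v {α t w s : ℝ} (hα : 0 < α) (htw : t < w) (hws : w < s) :
    ∫⁻ v in Ioo w s, ENNReal.ofReal ((s - v) ^ (α - 1) * (v - t) ^ (-α - 1))
      = ENNReal.ofReal (1 / (α * (s - t)) * ((s - w) / (w - t)) ^ α) := by
  have hcont : ContinuousOn (fun v : ℝ => -(1 / (α * (s - t)) * ((s - v) / (v - t)) ^ α))
      (Icc w s) := by
    refine ContinuousOn.neg (ContinuousOn.mul continuousOn_const ?_)
    refine ContinuousOn.rpow_const ?_ (fun x hx => Or.inr hα.le)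
    refine ContinuousOn.div (by fun_prop) (by fun_prop) ?_
    intro x hx; have := hx.1; intro h; linarith
  have hder : ∀ v ∈ Ioo w s,
      HasDerivAt (fun v : ℝ => -(1 / (α * (s - t)) * ((s - v) / (v - t)) ^ α))
        ((s - v) ^ (α - 1) * (v - t) ^ (-α - 1)) v := by
    intro v hv
    have h1 : 0 < s - v := by linarith [hv.2]
    have h2 : 0 < v - t := by linarith [hv.1]
    have h3 : 0 < s - t := by linarith
    have hd : HasDerivAt (fun v : ℝ => (s - v) / (v - t))
        (((-1) * (v - t) - (s - v) * 1) / (v - t) ^ 2) v :=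
      ((hasDerivAt_id v).const_sub s).div ((hasDerivAt_id v).sub_const t) h2.ne'
    have hd2 := ((hd.rpow_const (p := α) (Or.inl (div_pos h1 h2).ne')).const_mul
      (1 / (α * (s - t)))).neg
    refine hd2.congr_deriv ?_
    have e : (v - t) ^ (-α - 1) = ((v - t) ^ (α - 1))⁻¹ / (v - t) ^ 2 := by
      rw [show -α - 1 = -(α - 1) - 2 by ring, rpow_sub h2, rpow_neg h2.le]
      norm_num
    rw [div_rpow h1.le h2.le, e]
    have : (v - t) ^ (α - 1) ≠ 0 := (rpow_pos_of_pos h2 _).ne'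
    field_simp
    ring
  have hnn : ∀ v ∈ Ioo w s, 0 ≤ (s - v) ^ (α - 1) * (v - t) ^ (-α - 1) := by
    intro v hv
    have h1 : 0 < s - v := by linarith [hv.2]
    have h2 : 0 < v - t := by linarith [hv.1]
    positivity
  have hint := intervalIntegral.integrableOn_deriv_of_nonneg hcont hder hnn
  have hint2 := intervalIntegral.integral_eq_sub_of_hasDerivAt_of_le hws.le hcont hder
    ((intervalIntegrable_iff_integrableOn_Ioc_of_le hws.le).2 hint)
  rw [← ofReal_integral_eq_lintegral_ofReal (hint.mono_set Ioo_subset_Ioc_self)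
    ((ae_restrict_iff' measurableSet_Ioo).2 (Filter.Eventually.of_forall hnn)),
    ← integral_Ioc_eq_integral_Ioo, ← intervalIntegral.integral_of_le hws.le, hint2]
  simp [zero_rpow hα.ne']

noncomputable def Cc (α : ℝ) : ENNReal :=
  ∫⁻ z in Ioi (0:ℝ), ENNReal.ofReal (1 / α * (z ^ (α - 1) / (1 + z)))

lemma outer_t {α u w s : ℝ} (hα : 0 < α) (huw : u < w) (hws : w < s) :
    ∫⁻ t in Ioo u w, ENNReal.ofReal ((t - u) ^ (α - 1) *
        (1 / (α * (s - t)) * ((s - w) / (w - t)) ^ α))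
      = Cc α * ENNReal.ofReal ((s - u) ^ (α - 1)) := by
  have hsw : 0 < s - w := by linarith
  have hwu : 0 < w - u := by linarith
  have hsu : 0 < s - u := by linarith
  set F : ℝ → ℝ := fun z => (u * (s - w) + w * (s - u) * z) / ((s - w) + (s - u) * z) with hF
  have hD : ∀ z ∈ Ioi (0:ℝ), 0 < (s - w) + (s - u) * z := by
    intro z hz; have : 0 < z := hz; positivity
  have e1 : ∀ z ∈ Ioi (0:ℝ), F z - u = (w - u) * (s - u) * z / ((s - w) + (s - u) * z) := by
    intro z hz; have := (hD z hz).ne'; simp only [hF]; field_simp; ring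
  have e2 : ∀ z ∈ Ioi (0:ℝ), w - F z = (w - u) * (s - w) / ((s - w) + (s - u) * z) := by
    intro z hz; have := (hD z hz).ne'; simp only [hF]; field_simp; ring
  have e3 : ∀ z ∈ Ioi (0:ℝ), s - F z = (s - w) * (s - u) * (1 + z) /
      ((s - w) + (s - u) * z) := by
    intro z hz; have := (hD z hz).ne'; simp only [hF]; field_simp; ring
  have hder : ∀ z ∈ Ioi (0:ℝ), HasDerivWithinAt F
      ((s - u) * (s - w) * (w - u) / ((s - w) + (s - u) * z) ^ 2) (Ioi 0) z := by
    intro z hz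
    have hn : HasDerivAt (fun z : ℝ => u * (s - w) + w * (s - u) * z) (w * (s - u)) z := by
      simpa using ((hasDerivAt_id z).const_mul (w * (s - u))).const_add (u * (s - w))
    have hd : HasDerivAt (fun z : ℝ => (s - w) + (s - u) * z) (s - u) z := by
      simpa using ((hasDerivAt_id z).const_mul (s - u)).const_add (s - w)
    refine ((hn.div hd (hD z hz).ne').congr_deriv ?_).hasDerivWithinAt
    congr 1; ring
  have hinj : InjOn F (Ioi 0) := by
    intro x hx y hy hxy
    have h1 := hD x hx
    have h2 := hD y hy
    simp only [hF] at hxy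
    rw [div_eq_div_iff h1.ne' h2.ne'] at hxy
    have : (s - u) * (s - w) * (w - u) * (x - y) = 0 := by linear_combination hxy
    have h0 : (s - u) * (s - w) * (w - u) ≠ 0 := by positivity
    have := (mul_eq_zero.1 this).resolve_left h0
    linarith
  have himg : F '' Ioi 0 = Ioo u w := by
    ext t; constructor
    · rintro ⟨z, hz, rfl⟩
      have hz' : 0 < z := hz
      have h1 := hD z hz
      have h2 : 0 < F z - u := by rw [e1 z hz]; positivity
      have h3 : 0 < w - F z := by rw [e2 z hz]; positivity
      exact ⟨by linarith, by linarith⟩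
    · rintro ⟨h1, h2⟩
      have h1' : 0 < t - u := by linarith
      have h2' : 0 < w - t := by linarith
      have hz : 0 < (s - w) * (t - u) / ((s - u) * (w - t)) := by positivity
      refine ⟨(s - w) * (t - u) / ((s - u) * (w - t)), hz, ?_⟩
      simp only [hF]
      rw [div_eq_iff (hD _ hz).ne']
      field_simp
      ring
  rw [← himg, lintegral_image_eq_lintegral_abs_deriv_mul measurableSet_Ioi hder hinj, Cc,
    ← lintegral_mul_const' _ _ ENNReal.ofReal_ne_top]
  refine setLIntegral_congr_fun measurableSet_Ioi fun z hz => ?_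
  have hz' : 0 < z := hz
  have hDz := hD z hz
  rw [← ENNReal.ofReal_mul (abs_nonneg _), ← ENNReal.ofReal_mul (by positivity), e1 z hz, e2 z hz,
    e3 z hz]
  congr 1
  set D := (s - w) + (s - u) * z
  rw [abs_of_pos (by positivity),
    show (s - w) / ((w - u) * (s - w) / D) = D / (w - u) by field_simp,
    div_rpow (by positivity) hDz.le, div_rpow hDz.le hwu.le, mul_rpow (by positivity) hz'.le,
    mul_rpow hwu.le hsu.le, rpow_sub_one hwu.ne', rpow_sub_one hDz.ne']
  have : D ^ α ≠ 0 := (rpow_pos_of_pos hDz _).ne'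
  have : (w - u) ^ α ≠ 0 := (rpow_pos_of_pos hwu _).ne'
  field_simp

lemma Cc_lt_top {α : ℝ} (hα : 0 < α) (hα1 : α < 1) : Cc α < ⊤ := by
  have h1 : IntegrableOn (fun z : ℝ => 1 / α * (z ^ (α - 1) / (1 + z))) (Ioc 0 1) := by
    have h := (intervalIntegral.intervalIntegrable_rpow' (a := 0) (b := 1)
      (r := α - 1) (by linarith)).1
    refine (Integrable.mono' h (Measurable.aestronglyMeasurable (by fun_prop)) ?_).const_mul _
    refine (ae_restrict_iff' measurableSet_Ioc).2 (Filter.Eventually.of_forall fun z hz => ?_)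
    have := hz.1
    rw [Real.norm_of_nonneg (by positivity)]
    exact div_le_self (by positivity) (by linarith)
  have h2 : IntegrableOn (fun z : ℝ => 1 / α * (z ^ (α - 1) / (1 + z))) (Ioi 1) := by
    have h := integrableOn_Ioi_rpow_of_lt (a := α - 2) (c := 1) (by linarith) one_pos
    refine (Integrable.mono' h (Measurable.aestronglyMeasurable (by fun_prop)) ?_).const_mul _
    refine (ae_restrict_iff' measurableSet_Ioi).2 (Filter.Eventually.of_forall fun z hz => ?_)
    have hz : 1 < z := hz
    have hz0 : 0 < z := by linarith
    rw [Real.norm_of_nonneg (by positivity), show α - 2 = α - 1 - 1 by ring, rpow_sub_one hz0.ne'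
      (α - 1)]
    gcongr; linarith
  have h3 := h1.union h2
  rw [Ioc_union_Ioi_eq_Ioi zero_le_one] at h3
  exact h3.lintegral_lt_top

lemma Cc_pos {α : ℝ} (hα : 0 < α) : 0 < Cc α := by
  unfold Cc
  rw [setLIntegral_pos_iff (by fun_prop)]
  have : Ioi (0:ℝ) ⊆ Function.support
      (fun z : ℝ => ENNReal.ofReal (1 / α * (z ^ (α - 1) / (1 + z)))) ∩ Ioi 0 := by
    intro z hz
    have hz' : 0 < z := hz
    refine ⟨?_, hz⟩
    simp only [Function.mem_support, ne_eq, ENNReal.ofReal_eq_zero, not_le]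
    positivity
  refine lt_of_lt_of_le ?_ (measure_mono this)
  simp

noncomputable def Ak (α u s : ℝ) (q : ℝ × ℝ) : ℝ :=
  pk α (q.1 - u) * (pk α (s - q.2) * pk (-α) (q.2 - q.1))

lemma Ak_nonneg (α u s : ℝ) (q : ℝ × ℝ) : 0 ≤ Ak α u s q :=
  mul_nonneg (pk_nonneg _ _) (mul_nonneg (pk_nonneg _ _) (pk_nonneg _ _))

lemma Ak_eq_zero {α u s : ℝ} {q : ℝ × ℝ} (h : ¬ (u < q.1 ∧ q.1 < q.2 ∧ q.2 < s)) :
    Ak α u s q = 0 := by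
  unfold Ak
  by_cases h1 : u < q.1
  · by_cases h2 : q.1 < q.2
    · by_cases h3 : q.2 < s
      · exact absurd ⟨h1, h2, h3⟩ h
      · rw [pk_nonpos_eq (show s - q.2 ≤ 0 by linarith)]; simp
    · rw [pk_nonpos_eq (show q.2 - q.1 ≤ 0 by linarith)]; simp
  · rw [pk_nonpos_eq (show q.1 - u ≤ 0 by linarith)]; simp

lemma measurable_Ak (α u s : ℝ) : Measurable (Ak α u s) := by
  unfold Ak; fun_prop

noncomputable def Jk (w : ℝ) (q : ℝ × ℝ) : ℝ := if q.1 < w ∧ w < q.2 then 1 else 0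

lemma Jk_nonneg (w : ℝ) (q : ℝ × ℝ) : 0 ≤ Jk w q := by unfold Jk; split_ifs <;> norm_num

lemma measurable_Jk : Measurable (fun x : ℝ × (ℝ × ℝ) => Jk x.1 x.2) := by
  unfold Jk
  refine Measurable.ite ?_ measurable_const measurable_const
  exact (measurableSet_lt (measurable_fst.comp measurable_snd) measurable_fst).inter
    (measurableSet_lt measurable_fst (measurable_snd.comp measurable_snd))

lemma Ak_lint {α u w s : ℝ} (hα : 0 < α) (huw : u < w) (hws : w < s) :
    ∫⁻ q : ℝ × ℝ, ENNReal.ofReal (Ak α u s q * Jk w q)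
      = Cc α * ENNReal.ofReal ((s - u) ^ (α - 1)) := by
  have hJ : Measurable (Jk w) := measurable_Jk.comp (measurable_const.prodMk measurable_id)
  have hAJ : Measurable (fun q => Ak α u s q * Jk w q) := (measurable_Ak α u s).mul hJ
  rw [Measure.volume_eq_prod, lintegral_prod _ hAJ.ennreal_ofReal.aemeasurable, ← outer_t hα huw hws,
    ← lintegral_indicator measurableSet_Ioo]
  congr 1 with t
  by_cases ht : t ∈ Ioo u w
  · rw [indicator_of_mem ht]
    have h1 : 0 < t - u := by linarith [ht.1]
    rw [ENNReal.ofReal_mul (by positivity), ← inner_v hα ht.2 hws,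
      ← lintegral_const_mul' _ _ ENNReal.ofReal_ne_top, ← lintegral_indicator measurableSet_Ioo]
    congr 1 with v
    by_cases hv : v ∈ Ioo w s
    · rw [indicator_of_mem hv]
      have h2 : 0 < v - t := by linarith [hv.1, ht.2]
      have h3 : 0 < s - v := by linarith [hv.2]
      rw [← ENNReal.ofReal_mul (by positivity)]
      simp [Ak, Jk, pk_pos_eq h1, pk_pos_eq h2, pk_pos_eq h3, ht.2, hv.1]
    · rw [indicator_of_notMem hv]
      by_cases hv1 : w < v
      · rw [Ak_eq_zero]
        · simp
        · rintro ⟨_, _, h⟩; exact hv ⟨hv1, h⟩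
      · simp [Jk, hv1]
  · rw [indicator_of_notMem ht]
    rw [lintegral_eq_zero_iff' (by
      exact (((measurable_Ak α u s).mul hJ).ennreal_ofReal.comp measurable_prodMk_left).aemeasurable)]
    refine Filter.Eventually.of_forall fun v => ?_
    show ENNReal.ofReal (Ak α u s (t, v) * Jk w (t, v)) = 0
    by_cases h1 : t < w
    · rw [Ak_eq_zero]
      · simp
      · rintro ⟨h, _, _⟩; exact ht ⟨h, h1⟩
    · simp [Jk, h1]

lemma Ak_int_real {α u w s : ℝ} (hα : 0 < α) (huw : u < w) (hws : w < s) :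
    ∫ q : ℝ × ℝ, Ak α u s q * Jk w q = (Cc α).toReal * (s - u) ^ (α - 1) := by
  have hJ : Measurable (Jk w) := measurable_Jk.comp (measurable_const.prodMk measurable_id)
  have : 0 < s - u := by linarith
  rw [integral_eq_lintegral_of_nonneg_ae (Filter.Eventually.of_forall fun q =>
    mul_nonneg (Ak_nonneg _ _ _ _) (Jk_nonneg _ _))
    ((measurable_Ak α u s).mul hJ).aestronglyMeasurable, Ak_lint hα huw hws, ENNReal.toReal_mul,
    ENNReal.toReal_ofReal (by positivity)]

lemma smooth_id {α u s : ℝ} (hα : 0 < α) (hα1 : α < 1) (hus : u < s) (p H : ℝ → ℝ)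
    (hp : Continuous p) (M : ℝ) (hM : ∀ x, |p x| ≤ M)
    (hH : ∀ t v, H v - H t = ∫ x in t..v, p x) :
    ∫ q : ℝ × ℝ, Ak α u s q * (H q.1 - H q.2)
      = (Cc α).toReal * (s - u) ^ (α - 1) * (H u - H s) := by
  set μ : Measure ℝ := volume.restrict (Ioo u s) with hμ
  have hAJm : Measurable (fun x : ℝ × (ℝ × ℝ) => Ak α u s x.2 * Jk x.1 x.2) :=
    ((measurable_Ak α u s).comp measurable_snd).mul measurable_Jk
  have hAJ : Integrable (fun x : ℝ × (ℝ × ℝ) => Ak α u s x.2 * Jk x.1 x.2)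
      (μ.prod volume) := by
    refine ⟨hAJm.aestronglyMeasurable, ?_⟩
    rw [hasFiniteIntegral_iff_ofReal (Filter.Eventually.of_forall fun x =>
      mul_nonneg (Ak_nonneg _ _ _ _) (Jk_nonneg _ _)),
      lintegral_prod _ hAJm.ennreal_ofReal.aemeasurable]
    rw [setLIntegral_congr_fun measurableSet_Ioo (g := fun _ =>
      Cc α * ENNReal.ofReal ((s - u) ^ (α - 1))) (fun w hw => Ak_lint hα hw.1 hw.2)]
    rw [setLIntegral_const]
    refine ENNReal.mul_lt_top (ENNReal.mul_lt_top (Cc_lt_top hα hα1) ENNReal.ofReal_lt_top) ?_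
    simp
  have hI : Integrable (Function.uncurry fun (w : ℝ) (q : ℝ × ℝ) => p w * (Ak α u s q * Jk w q))
      (μ.prod volume) := by
    refine Integrable.bdd_mul (c := M) hAJ ?_ ?_
    · exact (hp.measurable.comp measurable_fst).aestronglyMeasurable
    · exact Filter.Eventually.of_forall fun x => hM x.1
  have hsw := integral_integral_swap hI
  have hL : ∫ w, ∫ q : ℝ × ℝ, p w * (Ak α u s q * Jk w q) ∂volume ∂μ
      = (Cc α).toReal * (s - u) ^ (α - 1) * (H s - H u) := by
    rw [hH, intervalIntegral.integral_of_le hus.le, integral_Ioc_eq_integral_Ioo,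
      ← integral_const_mul]
    refine setIntegral_congr_fun measurableSet_Ioo fun w hw => ?_
    rw [integral_const_mul, Ak_int_real hα hw.1 hw.2]; ring
  have hR : ∀ q : ℝ × ℝ, ∫ w, p w * (Ak α u s q * Jk w q) ∂μ = -(Ak α u s q * (H q.1 - H q.2)) := by
    intro q
    by_cases hq : u < q.1 ∧ q.1 < q.2 ∧ q.2 < s
    · have e : ∀ w, p w * (Ak α u s q * Jk w q) = Ak α u s q * (Ioo q.1 q.2).indicator p w := by
        intro w
        by_cases hw : w ∈ Ioo q.1 q.2
        · rw [indicator_of_mem hw]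
          have : Jk w q = 1 := by simp [Jk, hw.1, hw.2]
          rw [this]; ring
        · rw [indicator_of_notMem hw]
          have : Jk w q = 0 := by
            unfold Jk; rw [if_neg]; exact hw
          rw [this]; ring
      simp_rw [e]
      rw [integral_const_mul, integral_indicator measurableSet_Ioo, hμ,
        Measure.restrict_restrict measurableSet_Ioo,
        inter_eq_left.2 (Ioo_subset_Ioo hq.1.le hq.2.2.le), ← integral_Ioc_eq_integral_Ioo,
        ← intervalIntegral.integral_of_le hq.2.1.le, ← hH]
      ring
    · simp [Ak_eq_zero hq]
  simp_rw [hR] at hsw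
  rw [hL, integral_neg] at hsw
  linarith

lemma Ak_holder_eq (α β u s : ℝ) (q : ℝ × ℝ) : Ak α u s q * |q.1 - q.2| ^ β
    = pk α (q.1 - u) * (pk α (s - q.2) * pk (β - α) (q.2 - q.1)) := by
  unfold Ak
  rw [show β - α = -α + β by ring, ← pk_mul_rpow, abs_sub_comm]; ring

lemma Ak_holder_integrable {α β u s : ℝ} (hα : 0 < α) (hβ : α < β) :
    Integrable (fun q : ℝ × ℝ => Ak α u s q * |q.1 - q.2| ^ β) := by
  simp_rw [Ak_holder_eq]
  have hm : Measurable (fun q : ℝ × ℝ =>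
      pk α (q.1 - u) * (pk α (s - q.2) * pk (β - α) (q.2 - q.1))) := by fun_prop
  refine ⟨hm.aestronglyMeasurable, ?_⟩
  rw [hasFiniteIntegral_iff_ofReal (Filter.Eventually.of_forall fun x =>
      mul_nonneg (pk_nonneg _ _) (mul_nonneg (pk_nonneg _ _) (pk_nonneg _ _))),
      Measure.volume_eq_prod, lintegral_prod _ hm.ennreal_ofReal.aemeasurable]
  simp_rw [ENNReal.ofReal_mul (pk_nonneg α (_ - u))]
  simp_rw [lintegral_const_mul' _ _ ENNReal.ofReal_ne_top, beta_conv]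
  have e : ∀ t : ℝ, ENNReal.ofReal (pk α (t - u)) * (Bt α (β - α) *
      ENNReal.ofReal (pk (α + (β - α)) (s - t))) =
      Bt α (β - α) * ENNReal.ofReal (pk β (s - t) * pk α (t - u)) := by
    intro t
    rw [ENNReal.ofReal_mul (pk_nonneg _ _)]; ring_nf
  have hB := Bt_lt_top hα (sub_pos.2 hβ)
  simp_rw [e]
  rw [lintegral_const_mul' _ _ hB.ne, beta_conv]
  exact ENNReal.mul_lt_top hB (ENNReal.mul_lt_top (Bt_lt_top (hα.trans hβ) hα)
    ENNReal.ofReal_lt_top)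

lemma holder_cont {β K : ℝ} (hβ : 0 < β) {G : ℝ → ℝ}
    (hG : ∀ x y, |G x - G y| ≤ K * |x - y| ^ β) : Continuous G := by
  rw [continuous_iff_continuousAt]
  intro x
  rw [ContinuousAt, tendsto_iff_dist_tendsto_zero]
  refine squeeze_zero (fun _ => dist_nonneg) (fun y => hG y x) ?_
  have : Continuous (fun y : ℝ => K * |y - x| ^ β) :=
    continuous_const.mul (Continuous.rpow_const (by fun_prop) (fun _ => Or.inr hβ.le))
  have h := this.tendsto x
  simpa [zero_rpow hβ.ne'] using h

lemma holder_id {α β K : ℝ} (hα : 0 < α) (hα1 : α < 1) (hβ : α < β) {G : ℝ → ℝ}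
    (hG : ∀ x y, |G x - G y| ≤ K * |x - y| ^ β) (u s : ℝ) :
    ∫ q : ℝ × ℝ, Ak α u s q * (G q.1 - G q.2)
      = (Cc α).toReal * pk α (s - u) * (G u - G s) := by
  have hβ0 : 0 < β := hα.trans hβ
  have hGc := holder_cont hβ0 hG
  have hK : 0 ≤ K := by have := (abs_nonneg _).trans (hG 1 0); simpa using this
  rcases le_or_gt s u with h | hus
  · rw [pk_nonpos_eq (show s - u ≤ 0 by linarith)]
    have : ∀ q, Ak α u s q = 0 := fun q => Ak_eq_zero (by rintro ⟨h1, h2, h3⟩; linarith)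
    simp [this]
  rw [pk_pos_eq (show 0 < s - u by linarith)]
  set e : ℕ → ℝ := fun n => 1 / ((n : ℝ) + 1) with he
  have hepos : ∀ n, 0 < e n := fun n => by simp only [he]; positivity
  have helim : Filter.Tendsto e Filter.atTop (nhds 0) := tendsto_one_div_add_atTop_nhds_zero_nat
  set H : ℕ → ℝ → ℝ := fun n x => (e n)⁻¹ * ∫ r in (0:ℝ)..(e n), G (x + r) with hHdef
  have hii : ∀ x a b, IntervalIntegrable (fun r => G (x + r)) volume a b := fun x a b =>
    (hGc.comp (continuous_const.add continuous_id)).intervalIntegrable a b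
  have hHid : ∀ n t v, H n v - H n t = ∫ x in t..v, (e n)⁻¹ * (G (x + e n) - G x) := by
    intro n t v
    simp only [hHdef]
    rw [intervalIntegral.integral_const_mul, ← mul_sub]
    congr 1
    rw [intervalIntegral.integral_sub
      (f := fun x => G (x + e n)) ((hGc.comp
      (continuous_id.add continuous_const)).intervalIntegrable _ _)
      (hGc.intervalIntegrable _ _), intervalIntegral.integral_comp_add_right,
      intervalIntegral.integral_comp_add_left, intervalIntegral.integral_comp_add_left]
    simp only [add_zero]
    rw [intervalIntegral.integral_interval_sub_interval_comm (hGc.intervalIntegrable _ _)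
      (hGc.intervalIntegrable _ _) (hGc.intervalIntegrable _ _),
      intervalIntegral.integral_symm v t]
    have := intervalIntegral.integral_symm (μ := volume) (f := G) (v + e n) (t + e n)
    linarith
  have hHhol : ∀ n x y, |H n x - H n y| ≤ K * |x - y| ^ β := by
    intro n x y
    simp only [hHdef]
    rw [← mul_sub, ← intervalIntegral.integral_sub (hii _ _ _) (hii _ _ _), abs_mul,
      abs_of_pos (inv_pos.2 (hepos n)), inv_mul_le_iff₀ (hepos n), mul_comm (e n)]
    have := intervalIntegral.norm_integral_le_of_norm_le_const (a := 0) (b := e n)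
      (f := fun r => G (x + r) - G (y + r)) (C := K * |x - y| ^ β) (by
        intro r _
        have := hG (x + r) (y + r)
        simpa using this)
    simpa [abs_of_pos (hepos n)] using this
  have hHlim : ∀ x, Filter.Tendsto (fun n => H n x) Filter.atTop (nhds (G x)) := by
    intro x
    rw [tendsto_iff_dist_tendsto_zero]
    have hb : ∀ n, dist (H n x) (G x) ≤ K * (e n) ^ β := by
      intro n
      have h1 : G x = (e n)⁻¹ * ∫ r in (0:ℝ)..(e n), G x := by
        rw [intervalIntegral.integral_const]
        have := (hepos n).ne'
        simp; field_simp
      rw [Real.dist_eq]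
      have h2 : H n x - G x = (e n)⁻¹ * (∫ r in (0:ℝ)..(e n), G (x + r)) -
          (e n)⁻¹ * ∫ r in (0:ℝ)..(e n), G x := by rw [← h1]
      rw [h2]
      rw [← mul_sub, ← intervalIntegral.integral_sub (hii _ _ _) (by simp), abs_mul,
        abs_of_pos (inv_pos.2 (hepos n)), inv_mul_le_iff₀ (hepos n), mul_comm (e n)]
      have := intervalIntegral.norm_integral_le_of_norm_le_const (a := 0) (b := e n)
        (f := fun r => G (x + r) - G x) (C := K * (e n) ^ β) (by
          intro r hr
          rw [uIoc_of_le (hepos n).le] at hr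
          have := hG (x + r) x
          simp only [add_sub_cancel_left] at this
          refine this.trans ?_
          rw [abs_of_pos hr.1]
          have := hr.1
          have := hr.2
          gcongr)
      simpa [abs_of_pos (hepos n)] using this
    refine squeeze_zero (fun _ => dist_nonneg) hb ?_
    have := (helim.rpow_const (p := β) (Or.inr hβ0.le)).const_mul K
    simpa [zero_rpow hβ0.ne'] using this
  have hHc : ∀ n, Continuous (H n) := fun n => holder_cont hβ0 (hHhol n)
  have hid : ∀ n, ∫ q : ℝ × ℝ, Ak α u s q * (H n q.1 - H n q.2)
      = (Cc α).toReal * (s - u) ^ (α - 1) * (H n u - H n s) := by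
    intro n
    refine smooth_id hα hα1 hus (fun x => (e n)⁻¹ * (G (x + e n) - G x)) (H n) (by fun_prop)
      ((e n)⁻¹ * (K * (e n) ^ β)) ?_ (hHid n)
    intro x
    rw [abs_mul, abs_of_pos (inv_pos.2 (hepos n))]
    have := hG (x + e n) x
    simp only [add_sub_cancel_left, abs_of_pos (hepos n)] at this
    have := hepos n
    gcongr
  have hlim1 : Filter.Tendsto (fun n => ∫ q : ℝ × ℝ, Ak α u s q * (H n q.1 - H n q.2))
      Filter.atTop (nhds (∫ q : ℝ × ℝ, Ak α u s q * (G q.1 - G q.2))) := by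
    refine tendsto_integral_of_dominated_convergence
      (fun q => K * (Ak α u s q * |q.1 - q.2| ^ β)) ?_ ((Ak_holder_integrable hα hβ).const_mul K)
      ?_ ?_
    · intro n
      have := (hHc n).measurable
      exact ((measurable_Ak α u s).mul (by fun_prop)).aestronglyMeasurable
    · intro n
      refine Filter.Eventually.of_forall fun q => ?_
      rw [norm_mul, Real.norm_of_nonneg (Ak_nonneg _ _ _ _)]
      calc _ ≤ Ak α u s q * (K * |q.1 - q.2| ^ β) :=
            mul_le_mul_of_nonneg_left (hHhol n _ _) (Ak_nonneg _ _ _ _)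
        _ = _ := by ring
    · exact Filter.Eventually.of_forall fun q => ((hHlim _).sub (hHlim _)).const_mul _
  have hlim2 := ((hHlim u).sub (hHlim s)).const_mul ((Cc α).toReal * (s - u) ^ (α - 1))
  simp_rw [hid] at hlim1
  exact tendsto_nhds_unique hlim1 hlim2

lemma beta_integrable {a b : ℝ} (ha : 0 < a) (hb : 0 < b) (s t : ℝ) :
    Integrable (fun v : ℝ => pk a (s - v) * pk b (v - t)) := by
  have hm : Measurable (fun v : ℝ => pk a (s - v) * pk b (v - t)) := by fun_prop
  refine ⟨hm.aestronglyMeasurable, ?_⟩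
  rw [hasFiniteIntegral_iff_ofReal (Filter.Eventually.of_forall fun x =>
      mul_nonneg (pk_nonneg _ _) (pk_nonneg _ _)), beta_conv]
  exact ENNReal.mul_lt_top (Bt_lt_top ha hb) ENNReal.ofReal_lt_top

lemma beta_integral (a b s t : ℝ) :
    ∫ v : ℝ, pk a (s - v) * pk b (v - t) = (Bt a b).toReal * pk (a + b) (s - t) := by
  have hm : Measurable (fun v : ℝ => pk a (s - v) * pk b (v - t)) := by fun_prop
  rw [integral_eq_lintegral_of_nonneg_ae (Filter.Eventually.of_forall fun x =>
      mul_nonneg (pk_nonneg _ _) (pk_nonneg _ _)) hm.aestronglyMeasurable, beta_conv,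
      ENNReal.toReal_mul, ENNReal.toReal_ofReal (pk_nonneg _ _)]

noncomputable def kk (α : ℝ) (G : ℝ → ℝ) (t s : ℝ) : ℝ :=
  ∫ v, pk α (s - v) * pk (-α) (v - t) * (G t - G v)

lemma measurable_kk (α : ℝ) {G : ℝ → ℝ} (hG : Measurable G) :
    Measurable (fun x : ℝ × ℝ => kk α G x.1 x.2) := by
  have : Measurable (fun y : (ℝ × ℝ) × ℝ =>
      pk α (y.1.2 - y.2) * pk (-α) (y.2 - y.1.1) * (G y.1.1 - G y.2)) := by fun_prop
  exact this.stronglyMeasurable.integral_prod_right'.measurable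

lemma kk_bound {α β K : ℝ} (hα : 0 < α) (hβ : α < β) {G : ℝ → ℝ}
    (hG : ∀ x y, |G x - G y| ≤ K * |x - y| ^ β) (t s : ℝ) :
    |kk α G t s| ≤ K * (Bt α (β - α)).toReal * pk β (s - t) := by
  have h := beta_integral α (β - α) s t
  rw [show α + (β - α) = β by ring] at h
  rw [mul_assoc, ← h, ← integral_const_mul]
  rw [← Real.norm_eq_abs, kk]
  refine norm_integral_le_of_norm_le
    ((beta_integrable hα (sub_pos.2 hβ) s t).const_mul K) (Filter.Eventually.of_forall fun v => ?_)
  have hnn : 0 ≤ pk α (s - v) * pk (-α) (v - t) := mul_nonneg (pk_nonneg _ _) (pk_nonneg _ _)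
  rw [norm_mul, Real.norm_of_nonneg hnn]
  refine (mul_le_mul_of_nonneg_left (hG t v) hnn).trans_eq ?_
  rw [show β - α = -α + β by ring, ← pk_mul_rpow, abs_sub_comm]; ring

lemma kk_id {α β K : ℝ} (hα : 0 < α) (hα1 : α < 1) (hβ : α < β) {G : ℝ → ℝ}
    (hG : ∀ x y, |G x - G y| ≤ K * |x - y| ^ β) (u s : ℝ) :
    ∫ t, pk α (t - u) * kk α G t s = (Cc α).toReal * pk α (s - u) * (G u - G s) := by
  have hGm := (holder_cont (hα.trans hβ) hG).measurable
  rw [← holder_id hα hα1 hβ hG u s]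
  have hI : Integrable (fun q : ℝ × ℝ => Ak α u s q * (G q.1 - G q.2)) := by
    refine Integrable.mono' ((Ak_holder_integrable (u := u) (s := s) hα hβ).const_mul K)
      ((measurable_Ak α u s).mul (by fun_prop)).aestronglyMeasurable
      (Filter.Eventually.of_forall fun q => ?_)
    rw [norm_mul, Real.norm_of_nonneg (Ak_nonneg _ _ _ _)]
    refine (mul_le_mul_of_nonneg_left (hG q.1 q.2) (Ak_nonneg _ _ _ _)).trans_eq ?_
    ring
  rw [Measure.volume_eq_prod] at hI ⊢
  rw [integral_prod _ hI]
  congr 1 with t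
  rw [kk, ← integral_const_mul]
  congr 1 with v
  simp only [Ak]; ring

/-- Truncated kernel, integrable on the line. -/
noncomputable def tk (T a r : ℝ) : ℝ := if r < T then pk a r else 0

lemma tk_nonneg (T a r : ℝ) : 0 ≤ tk T a r := by
  unfold tk; split_ifs
  · exact pk_nonneg _ _
  · exact le_rfl

lemma tk_eq {T a r : ℝ} (h : r < T) : tk T a r = pk a r := by simp [tk, h]

lemma tk_integrable {T a : ℝ} (ha : 0 < a) : Integrable (tk T a) := by
  have h := (intervalIntegral.intervalIntegrable_rpow' (a := 0) (b := T)
      (r := a - 1) (by linarith)).1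
  have h2 : IntegrableOn (tk T a) (Ioo 0 T) := by
    refine (h.mono_set Ioo_subset_Ioc_self).congr_fun (fun x hx => ?_) measurableSet_Ioo
    rw [tk_eq hx.2, pk_pos_eq hx.1]
  refine (integrableOn_iff_integrable_of_support_subset ?_).1 h2
  intro x hx
  constructor
  · by_contra hh
    apply hx; unfold tk; split_ifs
    · exact pk_nonpos_eq (not_lt.1 hh)
    · rfl
  · by_contra hh
    apply hx; unfold tk; rw [if_neg hh]

lemma tk_conv {T a : ℝ} (ha : 0 < a) {h : ℝ → ℝ} (hh : Integrable h) :
    Integrable (fun p : ℝ × ℝ => h p.2 * tk T a (p.2 - p.1)) (volume.prod volume) := by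
  have h1 := (tk_integrable (T := T) ha).comp_neg
  have := Integrable.convolution_integrand (ContinuousLinearMap.mul ℝ ℝ) hh h1
  simpa using this

lemma tk_shift_integrable {T a : ℝ} (ha : 0 < a) (t : ℝ) :
    Integrable (fun s => tk T a (s - t)) := (tk_integrable ha).comp_sub_right t

lemma cs_aux {κ f : ℝ → ℝ} (hκ : ∀ x, 0 ≤ κ x) (h0 : Integrable κ)
    (h1 : Integrable (fun x => κ x * f x)) (h2 : Integrable (fun x => f x ^ 2 * κ x)) {a : ℝ}
    (ha : 0 < a) (haκ : ∫ x, κ x ≤ a) :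
    (∫ x, κ x * f x) ^ 2 ≤ a * ∫ x, f x ^ 2 * κ x := by
  set I := ∫ x, κ x * f x with hI
  have h3 : 0 ≤ ∫ x, κ x * (a * f x - I) ^ 2 :=
    integral_nonneg fun x => mul_nonneg (hκ x) (sq_nonneg _)
  have h4 : ∫ x, κ x * (a * f x - I) ^ 2
      = a ^ 2 * (∫ x, f x ^ 2 * κ x) - 2 * a * I * I + I ^ 2 * ∫ x, κ x := by
    have e : ∀ x, κ x * (a * f x - I) ^ 2
      = a ^ 2 * (f x ^ 2 * κ x) - 2 * a * I * (κ x * f x) + I ^ 2 * κ x := fun x => by ring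
    simp_rw [e]
    rw [integral_add (f := fun x => a ^ 2 * (f x ^ 2 * κ x) - 2 * a * I * (κ x * f x))
      ((h2.const_mul _).sub (h1.const_mul _)) (h0.const_mul _),
      integral_sub (h2.const_mul _) (h1.const_mul _), integral_const_mul, integral_const_mul,
      integral_const_mul]
  rw [h4] at h3
  have h5 : I ^ 2 * ∫ x, κ x ≤ I ^ 2 * a := mul_le_mul_of_nonneg_left haκ (sq_nonneg _)
  have h6 : 0 ≤ a * (a * (∫ x, f x ^ 2 * κ x) - I ^ 2) := by nlinarith
  have := nonneg_of_mul_nonneg_right h6 ha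
  linarith

lemma fracInt_eq {T α u : ℝ} (hu : 0 < u) (f : ℝ → ℝ) :
    fracInt T α f u = (1 / Real.Gamma α) * ∫ x, (Ioo 0 T).indicator f x * pk α (x - u) := by
  unfold fracInt
  congr 1
  rw [← integral_indicator measurableSet_Ioo]
  congr 1 with x
  by_cases hx : x ∈ Ioo u T
  · rw [indicator_of_mem hx, indicator_of_mem (show x ∈ Ioo 0 T from ⟨hu.trans hx.1, hx.2⟩),
      pk_pos_eq (by linarith [hx.1])]
  · rw [indicator_of_notMem hx]
    by_cases h1 : u < x
    · rw [indicator_of_notMem, zero_mul]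
      intro h; exact hx ⟨h1, h.2⟩
    · rw [pk_nonpos_eq (by linarith), mul_zero]

lemma core {T α β K : ℝ} (hα : 0 < α) (hα2 : α < 1 / 2) (hβ : α < β) (hβ1 : β < 1)
    {G : ℝ → ℝ} (hG : ∀ x y, |G x - G y| ≤ K * |x - y| ^ β) {φ : ℝ → ℝ} (hφm : Measurable φ)
    (hφ : MemLp φ 2 (volume.restrict (Icc 0 T))) :
    ∃ ψ : ℝ → ℝ, MemLp ψ 2 (volume.restrict (Icc 0 T)) ∧
      ∀ᵐ u ∂(volume.restrict (Icc 0 T)),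
        G u * fracInt T α (fun s => s ^ (-α) * φ s) u = fracInt T α (fun s => s ^ (-α) * ψ s) u := by
  have hα1 : α < 1 := by linarith
  have hβ0 : 0 < β := hα.trans hβ
  have hK : 0 ≤ K := by have := (abs_nonneg _).trans (hG 1 0); simpa using this
  have hGc := holder_cont hβ0 hG
  have hGm := hGc.measurable
  have hkm := measurable_kk α hGm
  set B : ℝ := K * (Bt α (β - α)).toReal with hB
  have hB0 : 0 ≤ B := by positivity
  have hkb : ∀ t s, |kk α G t s| ≤ B * pk β (s - t) := kk_bound hα hβ hG
  clear_value B
  set C : ℝ := (Cc α).toReal with hC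
  have hC0 : C ≠ 0 := (ENNReal.toReal_pos (Cc_pos hα).ne' (Cc_lt_top hα hα1).ne).ne'
  rw [← restrict_Ioo_eq_restrict_Icc] at hφ ⊢
  set h : ℝ → ℝ := (Ioo 0 T).indicator (fun s => s ^ (-α) * φ s) with hh
  have hhm : Measurable h := Measurable.indicator (by fun_prop) measurableSet_Ioo
  have hsq : MemLp (fun s : ℝ => s ^ (-α)) 2 (volume.restrict (Ioo 0 T)) := by
    have hm : Measurable (fun s : ℝ => s ^ (-α)) := by fun_prop
    rw [memLp_two_iff_integrable_sq hm.aestronglyMeasurable]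
    have h1 := (intervalIntegral.intervalIntegrable_rpow' (a := 0) (b := T)
      (r := -α * 2) (by linarith)).1
    refine IntegrableOn.congr_fun (h1.mono_set Ioo_subset_Ioc_self) (fun x hx => ?_)
      measurableSet_Ioo
    rw [rpow_mul hx.1.le]; norm_num
  have hhi : Integrable h := (integrable_indicator_iff measurableSet_Ioo).2 (hsq.integrable_mul hφ)
  -- φ truncated
  set φt : ℝ → ℝ := (Ioo 0 T).indicator (fun s => |φ s|) with hφt
  have hφtm : Measurable φt := Measurable.indicator (by fun_prop) measurableSet_Ioo
  have hφt2 : Integrable (fun s => φt s ^ 2) := by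
    have h1 := hφ.integrable_sq
    have h2 := (integrable_indicator_iff (f := fun x => φ x ^ 2) measurableSet_Ioo).2 h1
    refine h2.congr (Filter.Eventually.of_forall fun x => ?_)
    by_cases hx : x ∈ Ioo 0 T
    · simp [hφt, indicator_of_mem hx]
    · simp [hφt, indicator_of_notMem hx]
  set m : ℝ → ℝ := fun t => ∫ s, h s * kk α G t s with hm
  have hmm : Measurable m := by
    have : Measurable (fun x : ℝ × ℝ => h x.2 * kk α G x.1 x.2) := by fun_prop
    exact this.stronglyMeasurable.integral_prod_right'.measurable
  have hψ2 : MemLp (fun t => t ^ α * m t) 2 (volume.restrict (Ioo 0 T)) := by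
    have hmeas : Measurable (fun t => t ^ α * m t) := by fun_prop
    rw [memLp_two_iff_integrable_sq hmeas.aestronglyMeasurable]
    have hcv := tk_conv (T := T) hβ0 hφt2
    set a : ℝ := (∫ x, tk T β x) + 1 with ha
    have ha0 : 0 < a := by
      have : 0 ≤ ∫ x, tk T β x := integral_nonneg (tk_nonneg T β)
      linarith
    refine Integrable.mono' ((hcv.integral_prod_left.const_mul (B ^ 2 * a)).integrableOn
      (s := Ioo 0 T)) (by fun_prop) ?_
    rw [ae_restrict_iff' measurableSet_Ioo]
    filter_upwards [hcv.prod_right_ae] with t ht htT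
    have h0 := tk_shift_integrable (T := T) hβ0 t
    have htm : Measurable (fun s => tk T β (s - t)) := by
      have : Measurable (tk T β) :=
        Measurable.ite measurableSet_Iio (measurable_pk β) measurable_const
      exact this.comp (measurable_id.sub_const t)
    have h1 : Integrable (fun s => tk T β (s - t) * φt s) := by
      refine Integrable.mono' (h0.add ht) (htm.mul hφtm).aestronglyMeasurable
        (Filter.Eventually.of_forall fun s => ?_)
      rw [norm_mul, Real.norm_of_nonneg (tk_nonneg _ _ _), Real.norm_eq_abs]
      have h3 := tk_nonneg T β (s - t)
      have h4 : |φt s| ≤ 1 + φt s ^ 2 := by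
        rw [← sq_abs]; nlinarith [sq_nonneg (|φt s| - 1), abs_nonneg (φt s)]
      simp only [Pi.add_apply]
      nlinarith
    have hcs := cs_aux (fun s => tk_nonneg T β (s - t)) h0 h1 ht ha0 (by
      rw [integral_sub_right_eq_self (fun s => tk T β s) t]; linarith)
    have hb : |t ^ α * m t| ≤ B * ∫ s, tk T β (s - t) * φt s := by
      rw [hm, ← integral_const_mul, ← integral_const_mul]
      rw [← Real.norm_eq_abs]
      refine norm_integral_le_of_norm_le (h1.const_mul B) (Filter.Eventually.of_forall fun s => ?_)
      have hnn : 0 ≤ φt s := indicator_nonneg (fun _ _ => abs_nonneg _) s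
      have hnn2 : 0 ≤ B * (tk T β (s - t) * φt s) := mul_nonneg hB0 (mul_nonneg (tk_nonneg _ _ _) hnn)
      by_cases hs : s ∈ Ioo 0 T
      · have hb1 := hkb t s
        rcases le_or_gt s t with hst | hst
        · rw [pk_nonpos_eq (show s - t ≤ 0 by linarith), mul_zero] at hb1
          rw [abs_nonpos_iff.1 hb1]; simpa using hnn2
        · rw [tk_eq (show s - t < T by linarith [htT.1, hs.2]), hφt, indicator_of_mem hs, hh,
            indicator_of_mem hs, norm_mul, norm_mul, norm_mul, Real.norm_eq_abs (φ s),
            Real.norm_eq_abs (kk α G t s), Real.norm_of_nonneg (rpow_nonneg htT.1.le _),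
            Real.norm_of_nonneg (rpow_nonneg hs.1.le _)]
          have h5 : t ^ α * s ^ (-α) ≤ 1 := by
            rw [rpow_neg hs.1.le, ← div_eq_mul_inv, div_le_one (rpow_pos_of_pos hs.1 _)]
            exact rpow_le_rpow htT.1.le hst.le hα.le
          have h6 : 0 ≤ t ^ α * s ^ (-α) := mul_nonneg (rpow_nonneg htT.1.le _)
            (rpow_nonneg hs.1.le _)
          calc _ = (t ^ α * s ^ (-α)) * (|φ s| * |kk α G t s|) := by ring
            _ ≤ 1 * (|φ s| * (B * pk β (s - t))) := by gcongr
            _ = _ := by ring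
      · rw [hh, indicator_of_notMem hs]; simpa using hnn2
    rw [Real.norm_of_nonneg (sq_nonneg _), ← sq_abs]
    calc |t ^ α * m t| ^ 2 ≤ (B * ∫ s, tk T β (s - t) * φt s) ^ 2 := by gcongr
      _ = B ^ 2 * (∫ s, tk T β (s - t) * φt s) ^ 2 := by ring
      _ ≤ B ^ 2 * (a * ∫ s, φt s ^ 2 * tk T β (s - t)) := by gcongr
      _ = _ := by ring
  have hGb : ∀ x ∈ Ioo 0 T, |G x| ≤ |G 0| + K * T ^ β := by
    intro x hx
    have h1 := hG x 0
    rw [sub_zero, abs_of_pos hx.1] at h1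
    have h2 : K * x ^ β ≤ K * T ^ β :=
      mul_le_mul_of_nonneg_left (rpow_le_rpow hx.1.le hx.2.le hβ0.le) hK
    have h3 := abs_sub_abs_le_abs_sub (G x) (G 0)
    linarith
  have hψ1 : MemLp (fun t => G t * φ t) 2 (volume.restrict (Ioo 0 T)) := by
    refine MemLp.of_le_mul (c := |G 0| + K * T ^ β) hφ (by fun_prop) ?_
    refine (ae_restrict_iff' measurableSet_Ioo).2 (Filter.Eventually.of_forall fun x hx => ?_)
    rw [norm_mul]
    exact mul_le_mul_of_nonneg_right (hGb x hx) (norm_nonneg _)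
  refine ⟨fun t => G t * φ t + C⁻¹ * (t ^ α * m t), hψ1.add (hψ2.const_mul _), ?_⟩
  rw [ae_restrict_iff' measurableSet_Ioo]
  filter_upwards [(tk_conv (T := T) hα hhi).prod_right_ae] with u hu1 huT
  have hu : Integrable (fun s => h s * pk α (s - u)) := by
    refine hu1.congr (Filter.Eventually.of_forall fun s => ?_)
    simp only
    by_cases hs : s ∈ Ioo 0 T
    · rw [tk_eq]; linarith [hs.2, huT.1]
    · simp [hh, indicator_of_notMem hs]
  have hI : Integrable (Function.uncurry fun s t => h s * (pk α (t - u) * kk α G t s))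
      (volume.prod volume) := by
    have hmeas : Measurable (Function.uncurry fun s t => h s * (pk α (t - u) * kk α G t s)) := by
      have : Measurable (fun x : ℝ × ℝ => kk α G x.2 x.1) := hkm.comp measurable_swap
      unfold Function.uncurry
      fun_prop
    have hbd : Integrable (fun x : ℝ × ℝ => B * (h x.1 * (pk β (x.1 - x.2) * pk α (x.2 - u))))
        (volume.prod volume) := by
      have hmeas2 : Measurable (fun x : ℝ × ℝ =>
        B * (h x.1 * (pk β (x.1 - x.2) * pk α (x.2 - u)))) := by fun_prop
      rw [integrable_prod_iff hmeas2.aestronglyMeasurable]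
      refine ⟨Filter.Eventually.of_forall fun s =>
        ((beta_integrable hβ0 hα s u).const_mul (h s)).const_mul B, ?_⟩
      have e : ∀ s, ∫ t, ‖B * (h s * (pk β (s - t) * pk α (t - u)))‖
          = B * (|h s| * ((Bt β α).toReal * pk (β + α) (s - u))) := by
        intro s
        rw [← beta_integral, ← integral_const_mul, ← integral_const_mul]
        congr 1 with t
        rw [norm_mul, norm_mul, Real.norm_of_nonneg hB0,
          Real.norm_of_nonneg (mul_nonneg (pk_nonneg _ _) (pk_nonneg _ _)), Real.norm_eq_abs]
      simp_rw [e]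
      refine Integrable.const_mul ?_ B
      refine Integrable.mono' (hu.norm.const_mul ((Bt β α).toReal * T ^ β)) (by fun_prop)
        (Filter.Eventually.of_forall fun s => ?_)
      rw [norm_mul, norm_mul, norm_mul, Real.norm_eq_abs, abs_abs,
        Real.norm_of_nonneg ENNReal.toReal_nonneg, Real.norm_of_nonneg (pk_nonneg _ _),
        Real.norm_of_nonneg (pk_nonneg _ _), Real.norm_eq_abs]
      by_cases hs : s ∈ Ioo 0 T
      · rw [add_comm β α, ← pk_mul_rpow]
        rcases le_or_gt s u with hsu | hsu
        · rw [pk_nonpos_eq (show s - u ≤ 0 by linarith)]; simp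
        · have h7 : |s - u| ^ β ≤ T ^ β := by
            rw [abs_of_pos (by linarith)]
            exact rpow_le_rpow (by linarith) (by linarith [hs.2, huT.1]) hβ0.le
          have h8 := pk_nonneg α (s - u)
          calc _ ≤ |h s| * ((Bt β α).toReal * (pk α (s - u) * T ^ β)) := by gcongr
            _ = _ := by ring
      · simp [hh, indicator_of_notMem hs]
    refine Integrable.mono' hbd.norm hmeas.aestronglyMeasurable
      (Filter.Eventually.of_forall fun x => ?_)
    simp only [Function.uncurry]
    rw [norm_mul, norm_mul, norm_mul, norm_mul, norm_mul, Real.norm_of_nonneg hB0,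
      Real.norm_of_nonneg (pk_nonneg α _), Real.norm_of_nonneg (pk_nonneg β _),
      Real.norm_eq_abs (kk _ _ _ _)]
    have h8 := pk_nonneg α (x.2 - u)
    calc _ ≤ ‖h x.1‖ * (pk α (x.2 - u) * (B * pk β (x.1 - x.2))) := by
          gcongr; exact hkb _ _
      _ = _ := by ring
  have hsw := integral_integral_swap hI
  have hmi := hI.integral_prod_right
  simp only [Function.uncurry] at hmi
  have e1 : ∀ t, ∫ s, h s * (pk α (t - u) * kk α G t s) = m t * pk α (t - u) := by
    intro t
    rw [hm, mul_comm, ← integral_const_mul]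
    congr 1 with s; ring
  simp_rw [e1] at hsw hmi
  have e2 : ∀ s, ∫ t, h s * (pk α (t - u) * kk α G t s)
      = C * (G u * (h s * pk α (s - u)) - G s * (h s * pk α (s - u))) := by
    intro s
    rw [integral_const_mul, kk_id hα hα1 hβ hG u s]; ring
  have hGh : Integrable (fun s => G s * (h s * pk α (s - u))) := by
    refine Integrable.mono' (hu.norm.const_mul (|G 0| + K * T ^ β)) (by fun_prop)
      (Filter.Eventually.of_forall fun s => ?_)
    by_cases hs : s ∈ Ioo 0 T
    · rw [norm_mul]
      exact mul_le_mul_of_nonneg_right (hGb s hs) (norm_nonneg _)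
    · simp [hh, indicator_of_notMem hs]
  simp_rw [e2] at hsw
  rw [integral_const_mul, integral_sub (hu.const_mul _) hGh, integral_const_mul] at hsw
  rw [fracInt_eq huT.1, fracInt_eq huT.1]
  have e3 : ∀ x, (Ioo 0 T).indicator (fun s => s ^ (-α) * (G s * φ s + C⁻¹ * (s ^ α * m s))) x *
      pk α (x - u) = G x * (h x * pk α (x - u)) + C⁻¹ * (m x * pk α (x - u)) := by
    intro x
    by_cases hx : x ∈ Ioo 0 T
    · rw [indicator_of_mem hx, hh, indicator_of_mem hx, rpow_neg hx.1.le]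
      have := (rpow_pos_of_pos hx.1 α).ne'
      field_simp
    · rw [indicator_of_notMem hx]
      rcases le_or_gt x u with hxu | hxu
      · rw [pk_nonpos_eq (show x - u ≤ 0 by linarith)]; ring
      · have hTx : T ≤ x := by
          by_contra hcon; exact hx ⟨huT.1.trans hxu, not_le.1 hcon⟩
        have hmx : m x = 0 := by
          have : ∀ s, h s * kk α G x s = 0 := by
            intro s
            by_cases hs : s ∈ Ioo 0 T
            · have hb1 := hkb x s
              rw [pk_nonpos_eq (show s - x ≤ 0 by linarith [hs.2]), mul_zero] at hb1
              rw [abs_nonpos_iff.1 hb1, mul_zero]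
            · simp [hh, indicator_of_notMem hs]
          simp [hm, this]
        rw [hmx, hh, indicator_of_notMem hx]; ring
  simp_rw [e3]
  rw [integral_add hGh (hmi.const_mul _), integral_const_mul, ← hsw]
  field_simp
  ring

/-- Lemma 2.4: if `f ∈ Λ^α_T` and `g : [0,T] → ℝ` is Hölder continuous with exponent
`β > α`, then `g·f ∈ Λ^α_T`. -/
theorem holder_mul_memLambda (T α β : ℝ) (hT : 0 < T)
    (hα : α ∈ Set.Ioo (0 : ℝ) (1 / 2)) (hβ : α < β)
    (f φ : ℝ → ℝ) (hf : memLambda T α f φ)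
    (g : ℝ → ℝ) (K : ℝ)
    (hg : ∀ s ∈ Set.Icc (0 : ℝ) T, ∀ t ∈ Set.Icc (0 : ℝ) T, |g s - g t| ≤ K * |s - t| ^ β) :
    ∃ ψ : ℝ → ℝ, memLambda T α (fun u => g u * f u) ψ := by
  obtain ⟨hφ, hfe⟩ := hf
  obtain ⟨hα0, hα2⟩ := hα
  have hK : 0 ≤ K := by
    have := (abs_nonneg _).trans (hg T ⟨hT.le, le_rfl⟩ 0 ⟨le_rfl, hT.le⟩)
    rw [sub_zero, abs_of_pos hT] at this
    exact nonneg_of_mul_nonneg_left this (rpow_pos_of_pos hT _)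
  obtain ⟨γ, hγ1, hγ2⟩ := exists_between (lt_min hβ (show α < 1 by linarith))
  have hγβ : γ < β := hγ2.trans_le (min_le_left _ _)
  have hγ0 : 0 < γ := hα0.trans hγ1
  set G : ℝ → ℝ := fun x => g (projIcc 0 T hT.le x) with hGdef
  have hG : ∀ x y, |G x - G y| ≤ (K * T ^ (β - γ)) * |x - y| ^ γ := by
    intro x y
    obtain ⟨a, ha⟩ : ∃ a : ℝ, a = ((projIcc 0 T hT.le x : Icc 0 T) : ℝ) := ⟨_, rfl⟩
    obtain ⟨b, hb⟩ : ∃ b : ℝ, b = ((projIcc 0 T hT.le y : Icc 0 T) : ℝ) := ⟨_, rfl⟩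
    have ha' : a ∈ Icc 0 T := ha ▸ (projIcc 0 T hT.le x).2
    have hb' : b ∈ Icc 0 T := hb ▸ (projIcc 0 T hT.le y).2
    have h1 : |a - b| ≤ |x - y| := by
      rw [ha, hb]; exact abs_projIcc_sub_projIcc hT.le
    have h2 : |a - b| ≤ T := by
      rw [abs_le]; constructor <;> linarith [ha'.1, ha'.2, hb'.1, hb'.2]
    have h3 : |a - b| ^ β = |a - b| ^ (β - γ) * |a - b| ^ γ := by
      rw [← rpow_add_of_nonneg (abs_nonneg _) (by linarith) hγ0.le]; ring_nf
    calc |G x - G y| ≤ K * |a - b| ^ β := by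
          simp only [hGdef, ← ha, ← hb]; exact hg a ha' b hb'
      _ = K * |a - b| ^ (β - γ) * |a - b| ^ γ := by rw [h3]; ring
      _ ≤ (K * T ^ (β - γ)) * |x - y| ^ γ := by
        have : 0 ≤ β - γ := by linarith
        gcongr
  set φ' := hφ.1.mk φ with hφ'
  have hφm : Measurable φ' := hφ.1.stronglyMeasurable_mk.measurable
  have hae : φ =ᵐ[volume.restrict (Icc 0 T)] φ' := hφ.1.ae_eq_mk
  obtain ⟨ψ, hψ, hψe⟩ := core hα0 hα2 hγ1 (hγ2.trans_le (min_le_right _ _)) hG hφm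
    (hφ.ae_eq hae)
  refine ⟨ψ, hψ, ?_⟩
  filter_upwards [hfe, hψe, ae_restrict_mem measurableSet_Icc] with u h1 h2 huT
  have h3 : G u = g u := by simp only [hGdef]; rw [projIcc_of_mem hT.le huT]
  have h4 : fracInt T α (fun s => s ^ (-α) * φ s) u = fracInt T α (fun s => s ^ (-α) * φ' s) u := by
    unfold fracInt
    congr 1
    refine integral_congr_ae ?_
    have : φ =ᵐ[volume.restrict (Ioo u T)] φ' :=
      ae_restrict_of_ae_restrict_of_subset
        (show Ioo u T ⊆ Icc 0 T from fun x hx => ⟨huT.1.trans hx.1.le, hx.2.le⟩) hae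
    filter_upwards [this] with x hx
    rw [hx]
  rw [h1, h4, ← h2, h3]; ring
end
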